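/- Let p ≥ 2 be an integer and α ∈ (0, 1/(p−1)). Let γ : (0,∞) → ℝ be a function of bounded variation, let (c_k)_{k≥1} be complex numbers with Σ_{k=1}^∞ |c_k|^α < ∞ and (φ_k)_{k≥1} real numbers, and set W(x) = Σ_{k=1}^∞ c_k e^{−iφ_k x}. Suppose V(x) = γ(x) W(x) is real-valued and ∫_0^∞ |V(x)|^p dx < ∞. Then the set S = {E > 0 : some solution of −u'' + V u = E u on (0,∞) is unbounded} has Hausdorff dimension at most (p−1)α. -/

import Mathlib

open scoped BigOperators ENNReal
open MeasureTheory

/-- `u` (with derivative `u'`) is a solution of `-u'' + V u = E u` on `(0,∞)`: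
`u` is differentiable with derivative `u'`, and `u'` is locally absolutely continuous
with `-u'' + V u = E u` almost everywhere, encoded in integral (FTC) form. -/
def IsWeakSolution (V : ℝ → ℝ) (E : ℝ) (u u' : ℝ → ℂ) : Prop :=
  (∀ x ∈ Set.Ioi (0:ℝ), HasDerivAt u (u' x) x) ∧
  ∀ a b : ℝ, 0 < a → a ≤ b →
    IntervalIntegrable (fun x => (V x : ℂ) * u x - (E : ℂ) * u x) volume a b ∧
    u' b - u' a = ∫ x in a..b, ((V x : ℂ) * u x - (E : ℂ) * u x)

/-!
Let `E = k²` and `η = 2k`. For a real solution `u`, the quotient of `u' - iku` by `u' + iku` solves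
a Riccati equation, and a single approximate solution `v` of that equation with `|v| ≤ 1/2` and
integrable error is enough to bound every `u` by Grönwall's inequality. We look for `1 - v` as a
polynomial in `γ` of degree `p - 1`. Its coefficients are exponential series indexed by binary
trees labelled by the frequencies, with small divisors `η - φ(t)`, where `φ(t)` is the sum of the
labels of `t`; they converge as soon as `∑ w(t) / |η - φ(t)| < ∞`, where `w(t)` is the product of
the weights `|c_k| ^ (1 / (p - 1))` over the labels of `t`. Since `∑ w(t) ^ ((p - 1)α) < ∞`, a Riesz
potential estimate shows that the exceptional `η` have dimension at most `(p - 1)α`. The error is of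
the order of `|γ'| + |γ| ^ p` after smoothing `γ`, and `|γ| ^ p` is integrable because `γW ∈ L^p`
and the almost periodic function `W` has integrals bounded below over all long enough windows.
-/

section Dimension

open Filter Metric Set
open scoped NNReal Topology

theorem tsum_ne_top_of_eventually_le {f g : ℕ → ℝ≥0∞} (hf : ∀ n, f n ≠ ⊤)
    (hfg : ∀ᶠ n in atTop, f n ≤ g n) (hg : ∑' n, g n ≠ ⊤) : ∑' n, f n ≠ ⊤ := by
  obtain ⟨N, hN⟩ := eventually_atTop.1 hfg
  have htail : ∑' n, f (n + N) ≠ ⊤ := ne_top_of_le_ne_top hg <|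
    calc ∑' n, f (n + N) ≤ ∑' n, g (n + N) := ENNReal.tsum_le_tsum fun n => hN _ (N.le_add_left n)
      _ ≤ ∑' n, g n := ENNReal.tsum_comp_le_tsum_of_injective (add_left_injective N) g
  rw [← ENNReal.summable.sum_add_tsum_nat_add' (k := N)]
  exact ENNReal.add_ne_top.2 ⟨ENNReal.sum_ne_top.2 fun n _ => hf n, htail⟩

theorem tsum_two_inv_pow_rpow_ne_top {a : ℝ} (ha : 0 < a) :
    ∑' n : ℕ, (2⁻¹ ^ n : ℝ≥0∞) ^ a ≠ ⊤ := by
  have hlt : (2⁻¹ : ℝ≥0∞) ^ a < 1 := ENNReal.rpow_lt_one (by simp) ha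
  have hpow : ∀ n : ℕ, (2⁻¹ ^ n : ℝ≥0∞) ^ a = ((2⁻¹ : ℝ≥0∞) ^ a) ^ n := fun n => by
    rw [← ENNReal.rpow_mul_natCast, mul_comm a, ENNReal.rpow_natCast_mul]
  simpa only [hpow, ENNReal.tsum_geometric, ne_eq, ENNReal.inv_eq_top, tsub_eq_zero_iff_le, not_le]

theorem exists_two_inv_pow_succ_le_lt {d : ℝ≥0∞} (h0 : d ≠ 0) (h1 : d < 1) :
    ∃ n : ℕ, 2⁻¹ ^ (n + 1) ≤ d ∧ d < 2⁻¹ ^ n := by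
  have hex : ∃ n : ℕ, 2⁻¹ ^ n ≤ d := (ENNReal.exists_inv_two_pow_lt h0).imp fun _ => le_of_lt
  obtain ⟨n, hn⟩ : ∃ n, Nat.find hex = n + 1 :=
    Nat.exists_eq_succ_of_ne_zero (by simpa [Nat.find_eq_zero] using h1)
  exact ⟨n, hn ▸ Nat.find_spec hex, not_le.1 (Nat.find_min hex (hn ▸ n.lt_succ_self))⟩

variable {X : Type*} [EMetricSpace X]

theorem dimH_frequently_mem_le {ι : Type*} [Countable ι] {U : ι → Set X} {t : ℝ≥0} (ht : 0 < t)
    (hU : ∑' i, ediam (U i) ^ (t : ℝ) ≠ ⊤) : dimH {x | ∃ᶠ i in cofinite, x ∈ U i} ≤ t := by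
  borelize X
  have ht' : (0 : ℝ) < t := ht
  set tail : Finset ι → ℝ≥0∞ := fun F => ∑' i : {i // i ∉ F}, ediam (U i) ^ (t : ℝ)
  have htail : Tendsto tail atTop (𝓝 0) := ENNReal.tendsto_tsum_compl_atTop_zero hU
  have hradius : Tendsto (fun F => tail F ^ (t : ℝ)⁻¹) atTop (𝓝 0) := by
    have := ENNReal.continuous_rpow_const (y := (t : ℝ)⁻¹) |>.tendsto 0 |>.comp htail
    rwa [ENNReal.zero_rpow_of_pos (inv_pos.2 ht')] at this
  have hmeasure := Measure.hausdorffMeasure_le_liminf_tsum (t : ℝ) {x | ∃ᶠ i in cofinite, x ∈ U i}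
    _ hradius (fun F (i : {i // i ∉ F}) => U i)
    (Eventually.of_forall fun F i => (ENNReal.le_rpow_inv_iff ht').2 (ENNReal.le_tsum i))
    (Eventually.of_forall fun F x hx => by
      obtain ⟨i, hxi, hiF⟩ := (hx.and_eventually F.eventually_cofinite_notMem).exists
      exact mem_iUnion.2 ⟨⟨i, hiF⟩, hxi⟩)
  exact dimH_le_of_hausdorffMeasure_ne_top
    (ne_top_of_le_ne_top ENNReal.zero_ne_top (hmeasure.trans_eq htail.liminf_eq))

theorem tsum_ediam_closedEBall_rpow_le {s t : ℝ≥0} {r : ℝ≥0} (hr : r ≠ 0) {C : Set X} {m : ℝ≥0∞}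
    (hC : C.encard * (r : ℝ≥0∞) ^ (s : ℝ) ≤ m) :
    ∑' y : C, ediam (closedEBall (y : X) (2 * r)) ^ (t : ℝ) ≤
      m * 4 ^ (t : ℝ) * (r : ℝ≥0∞) ^ (t - s : ℝ) := by
  have hr' : (r : ℝ≥0∞) ≠ 0 := by simpa
  calc ∑' y : C, ediam (closedEBall (y : X) (2 * r)) ^ (t : ℝ)
      ≤ ∑' _ : C, (4 * r : ℝ≥0∞) ^ (t : ℝ) := by
        gcongr with y
        exact ediam_closedEBall_le.trans_eq (by rw [← mul_assoc]; norm_num)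
    _ = C.encard * (4 * r : ℝ≥0∞) ^ (t : ℝ) := by rw [ENNReal.tsum_const]; rfl
    _ = C.encard * (r : ℝ≥0∞) ^ (s : ℝ) * 4 ^ (t : ℝ) * (r : ℝ≥0∞) ^ (t - s : ℝ) := by
        rw [ENNReal.mul_rpow_of_nonneg _ _ t.coe_nonneg,
          ← add_sub_cancel (s : ℝ) t, ENNReal.rpow_add _ _ hr' ENNReal.coe_ne_top]
        simp only [add_sub_cancel]
        ring
    _ ≤ m * 4 ^ (t : ℝ) * (r : ℝ≥0∞) ^ (t - s : ℝ) := by gcongr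

theorem edist_rpow_neg_le_tsum_indicator (β : ℝ≥0) (x y : X) :
    edist x y ^ (-β : ℝ) ≤
      1 + ∑' n : ℕ, (2⁻¹ ^ (n + 1)) ^ (-β : ℝ) * (eball x (2⁻¹ ^ n)).indicator 1 y := by
  have hanti : ∀ {a b : ℝ≥0∞}, a ≤ b → b ^ (-β : ℝ) ≤ a ^ (-β : ℝ) := fun h => by
    simpa only [ENNReal.rpow_neg, ENNReal.inv_le_inv] using ENNReal.rpow_le_rpow h β.coe_nonneg
  rcases eq_or_ne (edist x y) 0 with h0 | h0
  · have hy : ∀ n : ℕ, y ∈ eball x (2⁻¹ ^ n) := fun n => by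
      rw [mem_eball', h0]; exact ENNReal.pow_pos (by simp) n
    have hone : ∀ n : ℕ,
        1 ≤ (2⁻¹ ^ (n + 1) : ℝ≥0∞) ^ (-β : ℝ) * (eball x (2⁻¹ ^ n)).indicator 1 y :=
      fun n => by
        rw [indicator_of_mem (hy n), Pi.one_apply, mul_one, ← ENNReal.one_rpow (-β : ℝ)]
        exact hanti (pow_le_one₀ zero_le (by simp))
    have htop := ENNReal.tsum_le_tsum hone
    rw [ENNReal.tsum_const_eq_top_of_ne_zero one_ne_zero, top_le_iff] at htop
    rw [htop, add_top]
    exact le_top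
  rcases le_or_gt 1 (edist x y) with h1 | h1
  · exact (hanti h1).trans (by simp)
  · obtain ⟨n, hle, hlt⟩ := exists_two_inv_pow_succ_le_lt h0 h1
    refine le_add_left (le_trans ?_ (ENNReal.le_tsum n))
    rw [indicator_of_mem (mem_eball'.2 hlt), Pi.one_apply, mul_one]
    exact hanti hle

variable [MeasurableSpace X] [OpensMeasurableSpace X] (ν : Measure X)

theorem encard_mul_le_measure_univ {r : ℝ≥0∞} {c : ℝ≥0∞} {C : Set X}
    (hC : C ⊆ {x | c ≤ ν (eball x r)}) (hsep : IsSeparated (2 * r) C) :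
    C.encard * c ≤ ν univ := by
  have hdisj : Pairwise (Function.onFun Disjoint fun x : C => eball (x : X) r) := by
    intro x y hxy
    refine eball_disjoint ?_
    rw [← two_mul]
    exact (hsep x.2 y.2 (Subtype.coe_ne_coe.2 hxy)).le
  calc (C.encard : ℝ≥0∞) * c = ∑' _ : C, c := by rw [ENNReal.tsum_const]; rfl
    _ ≤ ∑' x : C, ν (eball x r) := ENNReal.tsum_le_tsum fun x => hC x.2
    _ ≤ ν (⋃ x : C, eball x r) :=
        tsum_meas_le_meas_iUnion_of_disjoint ν (fun _ => isOpen_eball.measurableSet) hdisj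
    _ ≤ ν univ := measure_mono (subset_univ _)

theorem packingNumber_mul_le_measure_univ (r : ℝ≥0) (c : ℝ≥0∞) :
    packingNumber (2 * r) {x | c ≤ ν (eball x r)} * c ≤ ν univ := by
  simp only [packingNumber, ENat.toENNReal_iSup, ENNReal.iSup_mul, iSup_le_iff]
  exact fun C hC hsep => encard_mul_le_measure_univ ν hC (by exact_mod_cast hsep)

theorem lintegral_edist_rpow_neg_le (β : ℝ≥0) (x : X) :
    ∫⁻ y, edist x y ^ (-β : ℝ) ∂ν ≤
      ν univ + ∑' n : ℕ, (2⁻¹ ^ (n + 1)) ^ (-β : ℝ) * ν (eball x (2⁻¹ ^ n)) := by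
  have hball : ∀ n : ℕ, MeasurableSet (eball x (2⁻¹ ^ n)) := fun n => isOpen_eball.measurableSet
  refine (lintegral_mono (edist_rpow_neg_le_tsum_indicator β x)).trans_eq ?_
  rw [lintegral_add_left measurable_const, lintegral_one, lintegral_tsum fun n =>
    ((measurable_one.indicator (hball n)).const_mul _).aemeasurable]
  congr 2 with n
  rw [lintegral_const_mul _ (measurable_one.indicator (hball n)), lintegral_indicator_one (hball n)]

variable [IsFiniteMeasure ν]

theorem exists_isCover_encard_mul_le_measure_univ (r : ℝ≥0) {c : ℝ≥0∞} (hc : c ≠ 0) :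
    ∃ C : Set X, C.Finite ∧ IsCover (2 * r) {x | c ≤ ν (eball x r)} C ∧
      C.encard * c ≤ ν univ := by
  have hpacking : packingNumber (2 * r) {x | c ≤ ν (eball x r)} ≠ ⊤ := fun htop => by
    simpa [htop, ENNReal.top_mul hc] using packingNumber_mul_le_measure_univ ν r c
  refine ⟨_, ?_, isCover_maximalSeparatedSet hpacking,
    encard_mul_le_measure_univ ν maximalSeparatedSet_subset
      (by exact_mod_cast isSeparated_maximalSeparatedSet)⟩
  rw [← encard_ne_top_iff]
  exact (encard_maximalSeparatedSet hpacking).trans_ne hpacking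

theorem dimH_frequently_rpow_le_measure_eball_le {ι : Type*} [Countable ι] {r : ι → ℝ≥0}
    (hr : ∀ i, r i ≠ 0) {s t : ℝ≥0} (ht : 0 < t)
    (hsum : ∑' i, (r i : ℝ≥0∞) ^ (t - s : ℝ) ≠ ⊤) :
    dimH {x | ∃ᶠ i in cofinite, (r i : ℝ≥0∞) ^ (s : ℝ) ≤ ν (eball x (r i))} ≤ t := by
  choose C hfin hcover hcard using fun i => exists_isCover_encard_mul_le_measure_univ ν (r i)
    (c := (r i : ℝ≥0∞) ^ (s : ℝ)) (by simp [hr i])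
  have hcount : ∀ i, Countable (C i) := fun i => (hfin i).countable
  refine (dimH_mono fun x hx => ?_).trans (dimH_frequently_mem_le ht
    (U := fun j : Σ i, C i => closedEBall (j.2 : X) (2 * r j.1)) ?_)
  · rw [mem_ofPred_eq, frequently_cofinite_iff_infinite] at hx ⊢
    refine fun hfinite => hx ((hfinite.image Sigma.fst).subset fun i hi => ?_)
    obtain ⟨y, hyC, hxy⟩ := hcover i hi
    exact ⟨⟨i, y, hyC⟩, by simpa [edist_comm] using hxy, rfl⟩
  · rw [ENNReal.tsum_sigma']
    refine ne_top_of_le_ne_top ?_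
      (ENNReal.tsum_le_tsum fun i => tsum_ediam_closedEBall_rpow_le (hr i) (hcard i))
    rw [ENNReal.tsum_mul_left]
    exact ENNReal.mul_ne_top (ENNReal.mul_ne_top (measure_ne_top ν univ)
      (ENNReal.rpow_ne_top_of_nonneg t.2 (by simp))) hsum

theorem lintegral_edist_rpow_neg_ne_top {β s : ℝ≥0} (hβs : β < s) {x : X}
    (hx : ∀ᶠ n : ℕ in atTop, ν (eball x (2⁻¹ ^ n)) ≤ (2⁻¹ ^ n) ^ (s : ℝ)) :
    ∫⁻ y, edist x y ^ (-β : ℝ) ∂ν ≠ ⊤ := by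
  have hne : ∀ n : ℕ, (2⁻¹ ^ n : ℝ≥0∞) ≠ 0 ∧ (2⁻¹ ^ n : ℝ≥0∞) ≠ ⊤ := fun n => by simp
  have hpow_ne_top : ∀ a : ℝ, ∀ n : ℕ, (2⁻¹ ^ n : ℝ≥0∞) ^ a ≠ ⊤ := fun a n =>
    ENNReal.rpow_ne_top_of_ne_zero (hne n).1 (hne n).2
  have hterm : ∀ᶠ n : ℕ in atTop, (2⁻¹ ^ (n + 1)) ^ (-β : ℝ) * ν (eball x (2⁻¹ ^ n)) ≤
      2⁻¹ ^ (-β : ℝ) * (2⁻¹ ^ n) ^ (s - β : ℝ) := by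
    filter_upwards [hx] with n hn
    calc (2⁻¹ ^ (n + 1)) ^ (-β : ℝ) * ν (eball x (2⁻¹ ^ n))
        ≤ (2⁻¹ ^ (n + 1)) ^ (-β : ℝ) * (2⁻¹ ^ n) ^ (s : ℝ) := by gcongr
      _ = 2⁻¹ ^ (-β : ℝ) * (2⁻¹ ^ n) ^ (s - β : ℝ) := by
        rw [pow_succ', ENNReal.mul_rpow_of_ne_zero (by simp) (hne n).1, sub_eq_neg_add,
          ENNReal.rpow_add _ _ (hne n).1 (hne n).2, mul_assoc]
  refine ne_top_of_le_ne_top (ENNReal.add_ne_top.2 ⟨measure_ne_top ν univ,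
    tsum_ne_top_of_eventually_le (fun n =>
      ENNReal.mul_ne_top (hpow_ne_top _ _) (measure_ne_top _ _)) hterm ?_⟩)
    (lintegral_edist_rpow_neg_le ν β x)
  rw [ENNReal.tsum_mul_left]
  exact ENNReal.mul_ne_top (by simpa only [pow_one] using hpow_ne_top (-β) 1)
    (tsum_two_inv_pow_rpow_ne_top (sub_pos.2 hβs))

theorem dimH_lintegral_edist_rpow_neg_eq_top_le (β : ℝ≥0) :
    dimH {x | ∫⁻ y, edist x y ^ (-β : ℝ) ∂ν = ⊤} ≤ β := by
  refine ENNReal.le_of_forall_pos_le_add fun ε hε _ => ?_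
  obtain ⟨s, hβs, hsε⟩ := exists_between (lt_add_of_pos_right β hε)
  have hcoe : ∀ n : ℕ, ((2⁻¹ ^ n : ℝ≥0) : ℝ≥0∞) = 2⁻¹ ^ n := fun n => by
    rw [ENNReal.coe_pow, ENNReal.coe_inv_two]
  refine (dimH_mono fun x hx => ?_).trans (dimH_frequently_rpow_le_measure_eball_le ν
    (r := fun n : ℕ => 2⁻¹ ^ n) (s := s) (t := β + ε) (fun n => by positivity) (pos_of_gt hsε) ?_)
  · rw [mem_ofPred_eq, Nat.cofinite_eq_atTop]
    contrapose hx
    rw [not_frequently] at hx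
    refine lintegral_edist_rpow_neg_ne_top ν hβs (hx.mono fun n hn => ?_)
    rw [← hcoe]
    exact (not_le.1 hn).le
  · simp only [hcoe]
    exact tsum_two_inv_pow_rpow_ne_top (sub_pos.2 hsε)

end Dimension

section PointMasses

open Filter Metric Set
open scoped NNReal

theorem summable_of_summable_rpow {ι : Type*} {f : ι → ℝ} {β : ℝ} (hβ0 : 0 < β) (hβ1 : β ≤ 1)
    (hf : ∀ i, 0 ≤ f i) (hsum : Summable fun i => f i ^ β) : Summable f := by
  refine summable_of_isBigO hsum (Asymptotics.IsBigO.of_bound 1 ?_)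
  filter_upwards [hsum.tendsto_cofinite_zero.eventually_le_const one_pos] with i hi
  have hle : f i ≤ 1 := by
    by_contra! h
    exact hi.not_gt (Real.one_lt_rpow h hβ0)
  rw [one_mul, Real.norm_of_nonneg (hf i), Real.norm_of_nonneg (Real.rpow_nonneg (hf i) β)]
  exact Real.self_le_rpow_of_le_one (hf i) hle hβ1

variable {X ι : Type*}

/-- The measure with an atom of mass `w i ^ β` at each point `a i`. Its Riesz potential of order `β`
at `x` is the sum of `(w i / dist x (a i)) ^ β`. -/
noncomputable def rpowPointMasses [MeasurableSpace X] (a : ι → X) (w : ι → ℝ) (β : ℝ) :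
    Measure X :=
  Measure.sum fun i => ENNReal.ofReal (w i ^ β) • Measure.dirac (a i)

theorem isFiniteMeasure_rpowPointMasses [MeasurableSpace X] (a : ι → X) {w : ι → ℝ} {β : ℝ}
    (hsum : Summable fun i => w i ^ β) : IsFiniteMeasure (rpowPointMasses a w β) := by
  refine ⟨?_⟩
  simpa [rpowPointMasses, lt_top_iff_ne_top] using hsum.tsum_ofReal_ne_top

variable [MetricSpace X]

theorem lintegral_rpowPointMasses [MeasurableSpace X] [OpensMeasurableSpace X] (a : ι → X)
    (w : ι → ℝ) (β : ℝ) (x : X) :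
    ∫⁻ y, edist x y ^ (-β) ∂rpowPointMasses a w β =
      ∑' i, ENNReal.ofReal (w i ^ β) * edist x (a i) ^ (-β) := by
  have hmeas : Measurable fun y => edist x y ^ (-β) :=
    (continuous_const.edist continuous_id).measurable.pow_const _
  simp only [rpowPointMasses, lintegral_sum_measure, lintegral_smul_measure,
    lintegral_dirac' _ hmeas, smul_eq_mul]

theorem summable_div_dist_of_tsum_ne_top {a : ι → X} {w : ι → ℝ} (hw : ∀ i, 0 < w i) {β : ℝ}
    (hβ0 : 0 < β) (hβ1 : β ≤ 1) {x : X}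
    (hx : ∑' i, ENNReal.ofReal (w i ^ β) * edist x (a i) ^ (-β) ≠ ⊤) :
    (∀ i, x ≠ a i) ∧ Summable fun i => w i / dist x (a i) := by
  have hne : ∀ i, x ≠ a i := by
    rintro i rfl
    refine ENNReal.ne_top_of_tsum_ne_top hx i ?_
    rw [edist_self, ENNReal.zero_rpow_of_neg (neg_neg_of_pos hβ0), ENNReal.mul_top]
    exact (ENNReal.ofReal_pos.2 (Real.rpow_pos_of_pos (hw i) β)).ne'
  refine ⟨hne, summable_of_summable_rpow hβ0 hβ1 (fun i => by have := hw i; positivity) ?_⟩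
  have hterm : ∀ i, (ENNReal.ofReal (w i ^ β) * edist x (a i) ^ (-β)).toReal =
      (w i / dist x (a i)) ^ β := fun i => by
    rw [ENNReal.toReal_mul, ENNReal.toReal_ofReal (Real.rpow_nonneg (hw i).le β),
      ← ENNReal.toReal_rpow, ← dist_edist, Real.rpow_neg dist_nonneg,
      Real.div_rpow (hw i).le dist_nonneg, div_eq_mul_inv]
  simpa only [hterm] using ENNReal.summable_toReal hx

theorem dimH_not_summable_div_dist_le (a : ι → X) {w : ι → ℝ} (hw : ∀ i, 0 < w i) {β : ℝ}
    (hβ0 : 0 < β) (hβ1 : β ≤ 1) (hsum : Summable fun i => w i ^ β) :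
    dimH {x | ¬((∀ i, x ≠ a i) ∧ Summable fun i => w i / dist x (a i))} ≤ ENNReal.ofReal β := by
  borelize X
  have := isFiniteMeasure_rpowPointMasses a hsum
  lift β to ℝ≥0 using hβ0.le
  rw [ENNReal.ofReal_coe_nnreal]
  refine (dimH_mono fun x hx => ?_).trans
    (dimH_lintegral_edist_rpow_neg_eq_top_le (rpowPointMasses a w β) β)
  rw [mem_ofPred_eq] at hx ⊢
  contrapose! hx
  rw [lintegral_rpowPointMasses] at hx
  exact summable_div_dist_of_tsum_ne_top hw hβ0 hβ1 hx

end PointMasses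

section AlmostPeriodic

open Filter Set
open scoped Topology

variable {G : Type*} [Group G] [TopologicalSpace G] [IsTopologicalGroup G] {χ : AddChar ℝ G}
  {F : G → ℝ}

theorem exists_pos_comp_mul_of_mem_topologicalClosure (hF : Continuous F) {x₀ : ℝ}
    (hx₀ : 0 < F (χ x₀)) {z : G} (hz : z ∈ χ.toMonoidHom.range.topologicalClosure) :
    ∃ y, 0 < F (z * χ y) := by
  have hmem : z⁻¹ * χ x₀ ∈ χ.toMonoidHom.range.topologicalClosure :=
    mul_mem (inv_mem hz) (Subgroup.le_topologicalClosure _ ⟨Multiplicative.ofAdd x₀, rfl⟩)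
  have hopen : IsOpen {h | 0 < F (z * h)} :=
    isOpen_lt continuous_const (hF.comp (continuous_const_mul z))
  obtain ⟨_, hpos, y, rfl⟩ := mem_closure_iff.1 hmem _ hopen (by simpa using hx₀)
  exact ⟨y.toAdd, hpos⟩

theorem exists_pos_integral_of_mem_topologicalClosure (hχ : Continuous χ) (hF : Continuous F)
    (hF0 : ∀ z, 0 ≤ F z) {x₀ : ℝ} (hx₀ : 0 < F (χ x₀)) {z : G}
    (hz : z ∈ χ.toMonoidHom.range.topologicalClosure) :
    ∃ n : ℕ, 0 < ∫ y in (-n : ℝ)..n, F (z * χ y) := by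
  obtain ⟨y, hy⟩ := exists_pos_comp_mul_of_mem_topologicalClosure hF hx₀ hz
  obtain ⟨n, hn⟩ := exists_nat_gt |y|
  have hyn := abs_lt.1 hn
  exact ⟨n, intervalIntegral.integral_pos (by linarith)
    (hF.comp (continuous_const.mul hχ)).continuousOn (fun _ _ => hF0 _)
    ⟨y, ⟨hyn.1.le, hyn.2.le⟩, hy⟩⟩

theorem monotone_integral_comp_mul (hχ : Continuous χ) (hF : Continuous F) (hF0 : ∀ z, 0 ≤ F z)
    (z : G) : Monotone fun n : ℕ => ∫ y in (-n : ℝ)..n, F (z * χ y) := fun m n hmn => by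
  have hmn' : (m : ℝ) ≤ n := by exact_mod_cast hmn
  exact intervalIntegral.integral_mono_interval (by linarith) (by linarith [m.cast_nonneg (α := ℝ)])
    hmn' (Eventually.of_forall fun _ => hF0 _)
    ((hF.comp (continuous_const.mul hχ)).intervalIntegrable _ _)

-- On the hull of the orbit, which is compact, the integrals over `[-n, n]` of the translates are
-- continuous, increase with `n`, and cannot all vanish since every translate comes back near `x₀`.
theorem exists_le_integral_comp_addChar [CompactSpace G] (hχ : Continuous χ) (hF : Continuous F)
    (hF0 : ∀ z, 0 ≤ F z) {x₀ : ℝ} (hx₀ : 0 < F (χ x₀)) :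
    ∃ N : ℝ, 0 ≤ N ∧ ∃ δ > 0, ∀ x, δ ≤ ∫ y in x..x + N, F (χ y) := by
  set H := χ.toMonoidHom.range.topologicalClosure
  have hcont : ∀ n : ℕ, Continuous fun z => ∫ y in (-n : ℝ)..n, F (z * χ y) := fun n =>
    intervalIntegral.continuous_parametric_intervalIntegral_of_continuous'
      (f := fun z y => F (z * χ y)) (hF.comp (continuous_fst.mul (hχ.comp continuous_snd))) _ _
  have hcompact : IsCompact (H : Set G) := isClosed_closure.isCompact
  obtain ⟨n, hn⟩ : ∃ n : ℕ, (H : Set G) ⊆ {z | 0 < ∫ y in (-n : ℝ)..n, F (z * χ y)} :=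
    hcompact.elim_directed_cover _ (fun n => isOpen_lt continuous_const (hcont n))
      (fun z hz => mem_iUnion.2 (exists_pos_integral_of_mem_topologicalClosure hχ hF hF0 hx₀ hz))
      (directed_of_isDirected_le fun m n hmn z hz =>
        lt_of_lt_of_le hz (monotone_integral_comp_mul hχ hF hF0 z hmn))
  obtain ⟨z₀, hz₀, hmin⟩ := hcompact.exists_isMinOn ⟨1, one_mem H⟩ (hcont n).continuousOn
  refine ⟨2 * n, by positivity, _, hn hz₀, fun x => (hmin (a := χ (x + n)) ?_).trans_eq ?_⟩
  · exact Subgroup.le_topologicalClosure _ ⟨Multiplicative.ofAdd (x + n), rfl⟩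
  · simp only [← AddChar.map_add_eq_mul]
    rw [intervalIntegral.integral_comp_add_left fun y => F (χ y)]
    congr 1 <;> ring

variable {κ : Type*} {c : κ → ℂ}

/-- The almost periodic function with Fourier coefficients `c k` at the frequencies `-φ k`. -/
noncomputable def expSeries (c : κ → ℂ) (φ : κ → ℝ) (x : ℝ) : ℂ :=
  ∑' k, c k * Complex.exp (-Complex.I * φ k * x)

theorem norm_exp_neg_I_mul (a x : ℝ) : ‖Complex.exp (-Complex.I * a * x)‖ = 1 := by
  rw [show -Complex.I * (a : ℂ) * x = ((-(a * x) : ℝ) : ℂ) * Complex.I by push_cast; ring]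
  exact Complex.norm_exp_ofReal_mul_I _

theorem norm_mul_exp_neg_I_mul (z : ℂ) (a x : ℝ) :
    ‖z * Complex.exp (-Complex.I * a * x)‖ = ‖z‖ := by
  rw [norm_mul, norm_exp_neg_I_mul, mul_one]

theorem norm_expSeries_le (hc : Summable fun k => ‖c k‖) (φ : κ → ℝ) (x : ℝ) :
    ‖expSeries c φ x‖ ≤ ∑' k, ‖c k‖ :=
  tsum_of_norm_bounded hc.hasSum fun _ => (norm_mul_exp_neg_I_mul _ _ _).le

theorem continuous_expSeries (hc : Summable fun k => ‖c k‖) (φ : κ → ℝ) :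
    Continuous (expSeries c φ) :=
  continuous_tsum (fun _ => by fun_prop) hc fun _ _ => (norm_mul_exp_neg_I_mul _ _ _).le

theorem expSeries_support (c : κ → ℂ) (φ : κ → ℝ) :
    expSeries (fun k : Function.support c => c k) (fun k : Function.support c => φ k) =
      expSeries c φ :=
  funext fun _ => tsum_subtype_eq_of_support_subset
    (f := fun k => c k * Complex.exp (-Complex.I * φ k * _)) fun _ hk => left_ne_zero_of_mul hk

/-- The one-parameter subgroup of the torus `κ → Circle` along which `expSeries c φ` is the pullback
of the function `z ↦ ∑' k, c k * z k`. -/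
noncomputable def torusChar (φ : κ → ℝ) : AddChar ℝ (κ → Circle) where
  toFun x k := Circle.exp (-(φ k * x))
  map_zero_eq_one' := by ext; simp
  map_add_eq_mul' x y := by ext k; simp [mul_add, add_comm, Circle.exp_add]

theorem expSeries_eq_tsum_torusChar (c : κ → ℂ) (φ : κ → ℝ) (x : ℝ) :
    expSeries c φ x = ∑' k, c k * (torusChar φ x k : ℂ) := by
  refine tsum_congr fun k => ?_
  simp only [torusChar, AddChar.coe_mk, Circle.coe_exp]
  congr 2
  push_cast
  ring

theorem exists_le_integral_norm_expSeries_pow (hc : Summable fun k => ‖c k‖) (φ : κ → ℝ) {x₀ : ℝ}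
    (hx₀ : expSeries c φ x₀ ≠ 0) (p : ℕ) :
    ∃ N : ℝ, 0 ≤ N ∧ ∃ δ > 0, ∀ x, δ ≤ ∫ y in x..x + N, ‖expSeries c φ y‖ ^ p := by
  have hcont : Continuous fun z : κ → Circle => ‖∑' k, c k * (z k : ℂ)‖ ^ p :=
    (continuous_tsum (by fun_prop) hc fun k z => by simp [Circle.norm_coe]).norm.pow p
  have hχ : Continuous (torusChar φ) := continuous_pi fun k => by
    exact Circle.exp.continuous.comp (by fun_prop)
  simp only [expSeries_eq_tsum_torusChar] at hx₀ ⊢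
  exact exists_le_integral_comp_addChar hχ hcont (fun _ => by positivity)
    (by positivity : 0 < ‖∑' k, c k * (torusChar φ x₀ k : ℂ)‖ ^ p)

end AlmostPeriodic

section BoundedVariation

open Set Filter Topology

/-- The increments of `γ` are dominated by those of `T`, which is then automatically monotone.
Every function of bounded variation is so dominated by its total variation. -/
def VariationBoundedBy (γ T : ℝ → ℝ) : Prop :=
  ∀ ⦃x y⦄, x ≤ y → |γ y - γ x| ≤ T y - T x

namespace VariationBoundedBy

variable {γ T : ℝ → ℝ}

theorem monotone (h : VariationBoundedBy γ T) : Monotone T := fun _ _ hxy =>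
  sub_nonneg.1 ((abs_nonneg _).trans (h hxy))

theorem monotone_sub (h : VariationBoundedBy γ T) : Monotone (T - γ) := fun x y hxy => by
  have := (abs_le.1 (h hxy)).2
  simp only [Pi.sub_apply]
  linarith

theorem intervalIntegrable (h : VariationBoundedBy γ T) (a b : ℝ) :
    IntervalIntegrable γ volume a b := by
  simpa using h.monotone.intervalIntegrable.sub
    (h.monotone_sub.intervalIntegrable (a := a) (b := b))

theorem countable_not_continuousAt (h : VariationBoundedBy γ T) :
    {x | ¬ContinuousAt γ x}.Countable := by
  refine (h.monotone.countable_not_continuousAt.union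
    h.monotone_sub.countable_not_continuousAt).mono fun x hx => ?_
  by_contra hn
  simp only [mem_union, mem_ofPred_eq, not_or, not_not] at hn
  exact hx (by simpa using hn.1.sub hn.2)

theorem measurable (h : VariationBoundedBy γ T) : Measurable γ :=
  measurable_of_countable_not_continuousAt h.countable_not_continuousAt

theorem abs_sub_le_of_mem_Icc (h : VariationBoundedBy γ T) {a b x y : ℝ} (hx : x ∈ Icc a b)
    (hy : y ∈ Icc a b) : |γ y - γ x| ≤ T b - T a := by
  have hT := h.monotone
  rcases le_total x y with hxy | hxy
  · linarith [h hxy, hT hx.1, hT hy.2]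
  · rw [abs_sub_comm]
    linarith [h hxy, hT hy.1, hT hx.2]

theorem exists_forall_abs_le {X : ℝ} (h : VariationBoundedBy γ T)
    (hT : BddAbove (T '' Ioi X)) : ∃ M, ∀ x > X, |γ x| ≤ M := by
  obtain ⟨K, hK⟩ := hT
  refine ⟨|γ X| + (K - T X), fun x hx => ?_⟩
  linarith [abs_sub_abs_le_abs_sub (γ x) (γ X), h hx.le, hK (mem_image_of_mem T hx)]

end VariationBoundedBy

theorem exists_variationBoundedBy_of_boundedVariationOn {γ : ℝ → ℝ} {s : Set ℝ}
    (h : BoundedVariationOn γ s) :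
    ∃ γ' T : ℝ → ℝ, EqOn γ' γ s ∧ VariationBoundedBy γ' T ∧ BddAbove (T '' s) := by
  obtain rfl | ⟨a, ha⟩ := s.eq_empty_or_nonempty
  · exact ⟨0, 0, by simp, by simp [VariationBoundedBy], by simp⟩
  have hloc := h.locallyBoundedVariationOn
  have hv : ∀ x, |variationOnFromTo γ s a x| ≤ (eVariationOn γ s).toReal := fun _ =>
    variationOnFromTo.abs_le_eVariationOn h
  have hvγ : ∀ x ∈ s, |(variationOnFromTo γ s a - γ) x| ≤ 2 * (eVariationOn γ s).toReal + |γ a| :=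
    fun x hx => by
      have hγx := h.dist_le hx ha
      rw [Real.dist_eq] at hγx
      calc |(variationOnFromTo γ s a - γ) x|
          = |variationOnFromTo γ s a x - (γ x - γ a) - γ a| := by
            rw [Pi.sub_apply]; congr 1; ring
        _ ≤ |variationOnFromTo γ s a x| + |γ x - γ a| + |γ a| :=
          (abs_sub _ _).trans (by gcongr; exact abs_sub _ _)
        _ ≤ _ := by linarith [hv x]
  obtain ⟨F, hF, hFeq⟩ := (variationOnFromTo.monotoneOn hloc ha).exists_monotone_extension
    ⟨_, forall_mem_image.2 fun x _ => (abs_le.1 (hv x)).1⟩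
    ⟨_, forall_mem_image.2 fun x _ => (abs_le.1 (hv x)).2⟩
  obtain ⟨G, hG, hGeq⟩ := (variationOnFromTo.sub_self_monotoneOn hloc ha).exists_monotone_extension
    ⟨_, forall_mem_image.2 fun x hx => (abs_le.1 (hvγ x hx)).1⟩
    ⟨_, forall_mem_image.2 fun x hx => (abs_le.1 (hvγ x hx)).2⟩
  refine ⟨F - G, F + G, fun x hx => by simp [← hFeq hx, ← hGeq hx], fun x y hxy => ?_,
    ⟨(eVariationOn γ s).toReal + (2 * (eVariationOn γ s).toReal + |γ a|),
      forall_mem_image.2 fun x hx => ?_⟩⟩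
  · have hFxy := hF hxy
    have hGxy := hG hxy
    simp only [Pi.sub_apply, Pi.add_apply, abs_le]
    constructor <;> linarith
  · rw [Pi.add_apply, ← hFeq hx, ← hGeq hx]
    exact add_le_add (abs_le.1 (hv x)).2 (abs_le.1 (hvγ x hx)).2

section Increments

variable {T : ℝ → ℝ} {d X : ℝ}

theorem integrableOn_Ioi_sub_of_monotone (hT : Monotone T) (hb : BddAbove (T '' Ioi X))
    (hd : 0 ≤ d) : IntegrableOn (fun x => T (x + d) - T x) (Ioi X) := by
  obtain ⟨K, hK⟩ := hb
  have hi : ∀ a b, IntervalIntegrable T volume a b := fun a b => hT.intervalIntegrable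
  have hid : ∀ a b, IntervalIntegrable (fun x => T (x + d)) volume a b := fun a b =>
    (hT.comp (add_left_mono (a := d))).intervalIntegrable
  refine integrableOn_Ioi_of_intervalIntegral_norm_bounded (l := atTop) (b := id)
    (K * d - ∫ x in X..X + d, T x) X (fun b => ((hid X b).sub (hi X b)).1) tendsto_id ?_
  filter_upwards [eventually_ge_atTop X] with b hXb
  have hnorm : ∀ x, ‖T (x + d) - T x‖ = T (x + d) - T x := fun x =>
    Real.norm_of_nonneg (sub_nonneg.2 (hT (by linarith)))
  have hbK : ∫ x in b..b + d, T x ≤ K * d := by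
    have := intervalIntegral.integral_mono_on_of_le_Ioo (a := b) (b := b + d) (by linarith)
      (hi _ _) intervalIntegrable_const fun x hx =>
        hK (mem_image_of_mem T (mem_Ioi.2 (hXb.trans_lt hx.1)))
    simpa [mul_comm] using this
  simp only [hnorm, id]
  rw [intervalIntegral.integral_sub (hid _ _) (hi _ _), intervalIntegral.integral_comp_add_right,
    intervalIntegral.integral_interval_sub_interval_comm' (hi _ _) (hi _ _) (hi _ _)]
  linarith

theorem tendsto_sub_of_monotone (hT : Monotone T) (hb : BddAbove (T '' Ioi X)) (d : ℝ) :
    Tendsto (fun x => T (x + d) - T x) atTop (𝓝 0) := by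
  obtain ⟨K, hK⟩ := hb
  have hrange : BddAbove (range T) := ⟨K, forall_mem_range.2 fun x =>
    (hT (le_max_left x (X + 1))).trans (hK (mem_image_of_mem T (by simp)))⟩
  have hlim := tendsto_atTop_ciSup hT hrange
  simpa using (hlim.comp (tendsto_atTop_add_const_right atTop d tendsto_id)).sub hlim

theorem integrableOn_Ioi_intervalIntegral_add {P : ℝ → ℝ} (hP : IntegrableOn P (Ioi X))
    (hP0 : ∀ x > X, 0 ≤ P x) (hd : 0 ≤ d) :
    IntegrableOn (fun x => ∫ y in x..x + d, P y) (Ioi X) ∧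
      Tendsto (fun x => ∫ y in x..x + d, P y) atTop (𝓝 0) := by
  have hQ : Integrable ((Ioi X).indicator P) := hP.integrable_indicator measurableSet_Ioi
  have hQ0 : ∀ x, 0 ≤ (Ioi X).indicator P x := fun x => indicator_nonneg hP0 x
  set Φ : ℝ → ℝ := fun x => ∫ y in Iic x, (Ioi X).indicator P y with hΦ
  have hmono : Monotone Φ := fun x y hxy =>
    setIntegral_mono_set hQ.integrableOn (Eventually.of_forall hQ0)
      (Iic_subset_Iic.2 hxy).eventuallyLE
  have hbdd : BddAbove (Φ '' Ioi X) := ⟨_, forall_mem_image.2 fun _ _ =>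
    setIntegral_le_integral hQ (Eventually.of_forall hQ0)⟩
  have hdiff : ∀ x > X, Φ (x + d) - Φ x = ∫ y in x..x + d, P y := fun x hx => by
    rw [hΦ, intervalIntegral.integral_Iic_sub_Iic hQ.integrableOn hQ.integrableOn]
    refine intervalIntegral.integral_congr fun y hy => ?_
    rw [uIcc_of_le (by linarith)] at hy
    exact indicator_of_mem (mem_Ioi.2 (hx.trans_le hy.1)) P
  exact ⟨(integrableOn_Ioi_sub_of_monotone hmono hbdd hd).congr_fun hdiff measurableSet_Ioi,
    (tendsto_sub_of_monotone hmono hbdd d).congr' ((eventually_gt_atTop X).mono hdiff)⟩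

end Increments

section Decay

variable {γ T : ℝ → ℝ} {ω : ℝ → ℂ} {M N X : ℝ} {p : ℕ}

theorem VariationBoundedBy.abs_pow_mul_integral_le (h : VariationBoundedBy γ T) (hω : Continuous ω)
    (hM : ∀ x, ‖ω x‖ ≤ M) (hN : 0 ≤ N) {x : ℝ}
    (hi : IntervalIntegrable (fun y => (|γ y| * ‖ω y‖) ^ p) volume x (x + N)) :
    |γ x| ^ p * ∫ y in x..x + N, ‖ω y‖ ^ p ≤
      2 ^ (p - 1) *
        ((∫ y in x..x + N, (|γ y| * ‖ω y‖) ^ p) + N * (M * (T (x + N) - T x)) ^ p) := by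
  have hM0 : 0 ≤ M := (norm_nonneg _).trans (hM 0)
  have hT0 : 0 ≤ T (x + N) - T x := sub_nonneg.2 (h.monotone (by linarith))
  have hpt : ∀ y ∈ Icc x (x + N), |γ x| ^ p * ‖ω y‖ ^ p ≤
      2 ^ (p - 1) * ((|γ y| * ‖ω y‖) ^ p + (M * (T (x + N) - T x)) ^ p) := fun y hy => by
    have hγ : |γ x| ≤ |γ y| + (T (x + N) - T x) := by
      linarith [abs_sub_abs_le_abs_sub (γ x) (γ y),
        h.abs_sub_le_of_mem_Icc hy ⟨le_rfl, by linarith⟩]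
    calc |γ x| ^ p * ‖ω y‖ ^ p = (|γ x| * ‖ω y‖) ^ p := (mul_pow _ _ _).symm
      _ ≤ (|γ y| * ‖ω y‖ + M * (T (x + N) - T x)) ^ p := by
        gcongr
        nlinarith [mul_le_mul_of_nonneg_right hγ (norm_nonneg (ω y)),
          mul_le_mul_of_nonneg_right (hM y) hT0]
      _ ≤ _ := add_pow_le (by positivity) (by positivity) p
  have hmono := intervalIntegral.integral_mono_on (by linarith)
    (((hω.norm.pow p).const_mul (|γ x| ^ p)).intervalIntegrable _ _)
    ((hi.add intervalIntegrable_const).const_mul (2 ^ (p - 1))) hpt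
  simpa [intervalIntegral.integral_add hi intervalIntegrable_const] using hmono

theorem integrable_pow_of_norm_le {α : Type*} [MeasurableSpace α] {μ : Measure α} {f : α → ℝ}
    {K : ℝ} (hf : Integrable f μ) (hK : ∀ᵐ x ∂μ, ‖f x‖ ≤ K) (hp : p ≠ 0) :
    Integrable (fun x => f x ^ p) μ := by
  obtain ⟨m, rfl⟩ := Nat.exists_eq_succ_of_ne_zero hp
  simp only [pow_succ]
  refine hf.bdd_mul (c := K ^ m) (hf.aestronglyMeasurable.pow m) ?_
  filter_upwards [hK] with x hx
  rw [norm_pow]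
  gcongr

theorem VariationBoundedBy.integrableOn_Ioi_sub_pow (h : VariationBoundedBy γ T)
    (hT : BddAbove (T '' Ioi X)) (hN : 0 ≤ N) (hp : p ≠ 0) :
    IntegrableOn (fun x => (T (x + N) - T x) ^ p) (Ioi X) := by
  have hmono := h.monotone
  obtain ⟨K, hK⟩ := id hT
  refine integrable_pow_of_norm_le (K := K - T X)
    (integrableOn_Ioi_sub_of_monotone hmono hT hN) ?_ hp
  filter_upwards [ae_restrict_mem measurableSet_Ioi] with x hx
  rw [Real.norm_of_nonneg (sub_nonneg.2 (hmono (by linarith)))]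
  exact sub_le_sub (hK (mem_image_of_mem T (by rw [mem_Ioi] at *; linarith)))
    (hmono (mem_Ioi.1 hx).le)

-- A function of bounded variation is nearly constant on most windows of length `N`, so there
-- it can be pulled out of the integral of `|γ| ^ p * ‖ω‖ ^ p`.
theorem VariationBoundedBy.integrableOn_pow_and_tendsto_zero (h : VariationBoundedBy γ T)
    (hT : BddAbove (T '' Ioi X)) (hω : Continuous ω) (hM : ∀ x, ‖ω x‖ ≤ M) (hp : p ≠ 0)
    (hi : IntegrableOn (fun x => (|γ x| * ‖ω x‖) ^ p) (Ioi X)) (hN : 0 ≤ N) {δ : ℝ} (hδ : 0 < δ)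
    (hlow : ∀ x, δ ≤ ∫ y in x..x + N, ‖ω y‖ ^ p) :
    IntegrableOn (fun x => |γ x| ^ p) (Ioi X) ∧ Tendsto γ atTop (𝓝 0) := by
  set R : ℝ → ℝ := fun x => 2 ^ (p - 1) *
    ((∫ y in x..x + N, (|γ y| * ‖ω y‖) ^ p) + N * (M * (T (x + N) - T x)) ^ p) / δ
  have hle : ∀ x > X, |γ x| ^ p ≤ R x := fun x hx => by
    have hix : IntervalIntegrable (fun y => (|γ y| * ‖ω y‖) ^ p) volume x (x + N) :=
      (intervalIntegrable_iff_integrableOn_Ioc_of_le (by linarith)).2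
        (hi.mono_set fun y hy => hx.trans hy.1)
    rw [le_div_iff₀ hδ]
    exact (mul_le_mul_of_nonneg_left (hlow x) (by positivity)).trans
      (h.abs_pow_mul_integral_le hω hM hN hix)
  obtain ⟨hPi, hPlim⟩ := integrableOn_Ioi_intervalIntegral_add hi (fun _ _ => by positivity) hN
  have hRi : IntegrableOn R (Ioi X) := by
    simp only [R, mul_pow M]
    exact ((hPi.add (((h.integrableOn_Ioi_sub_pow hT hN hp).const_mul _).const_mul N)).const_mul
      _).div_const δ
  have hRlim : Tendsto R atTop (𝓝 0) := by
    have hTlim := (((tendsto_sub_of_monotone h.monotone hT N).const_mul M).pow p).const_mul N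
    simpa [hp] using ((hPlim.add hTlim).const_mul (2 ^ (p - 1))).div_const δ
  refine ⟨hRi.mono' (h.measurable.abs.pow_const p).aestronglyMeasurable ?_, ?_⟩
  · filter_upwards [ae_restrict_mem measurableSet_Ioi] with x hx
    rw [Real.norm_of_nonneg (by positivity)]
    exact hle x hx
  · have hpow : Tendsto (fun x => |γ x| ^ p) atTop (𝓝 0) :=
      squeeze_zero' (Eventually.of_forall fun _ => by positivity)
        ((eventually_gt_atTop X).mono hle) hRlim
    have hroot := hpow.rpow_const (p := (p : ℝ)⁻¹) (Or.inr (by positivity))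
    rw [Real.zero_rpow (by positivity)] at hroot
    exact (tendsto_zero_iff_abs_tendsto_zero _).2
      (hroot.congr fun x => Real.pow_rpow_inv_natCast (abs_nonneg _) hp)

end Decay

section Smoothing

/-- The average of `f` over the window `[x, x + 1]`. -/
noncomputable def unitAverage (f : ℝ → ℝ) (x : ℝ) : ℝ := ∫ y in x..x + 1, f y

variable {f : ℝ → ℝ}

theorem abs_unitAverage_sub_le (hf : ∀ a b, IntervalIntegrable f volume a b) {x a e : ℝ}
    (he : ∀ y ∈ Icc x (x + 1), |f y - a| ≤ e) : |unitAverage f x - a| ≤ e := by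
  have hsub : ∫ y in x..x + 1, (f y - a) = unitAverage f x - a := by
    simp [intervalIntegral.integral_sub (hf _ _) intervalIntegrable_const, unitAverage]
  rw [← hsub]
  simpa using intervalIntegral.norm_integral_le_of_norm_le_const (a := x) (b := x + 1)
    (f := fun y => f y - a) fun y hy => by
      rw [uIoc_of_le (by linarith)] at hy
      exact he y (Ioc_subset_Icc_self hy)

theorem unitAverage_eq_sub (hf : ∀ a b, IntervalIntegrable f volume a b) (x : ℝ) :
    unitAverage f x = (∫ y in (0 : ℝ)..x + 1, f y) - ∫ y in (0 : ℝ)..x, f y :=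
  (intervalIntegral.integral_interval_sub_left (hf _ _) (hf _ _)).symm

theorem continuous_unitAverage (hf : ∀ a b, IntervalIntegrable f volume a b) :
    Continuous (unitAverage f) := by
  have hprim := intervalIntegral.continuous_primitive hf 0
  rw [funext (unitAverage_eq_sub hf)]
  exact (hprim.comp (continuous_add_const 1)).sub hprim

theorem hasDerivAt_unitAverage (hf : Continuous f) (x : ℝ) :
    HasDerivAt (unitAverage f) (f (x + 1) - f x) x := by
  rw [funext (unitAverage_eq_sub hf.intervalIntegrable)]
  exact ((hf.integral_hasStrictDerivAt 0 (x + 1)).hasDerivAt.comp_add_const x 1).sub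
    (hf.integral_hasStrictDerivAt 0 x).hasDerivAt

theorem VariationBoundedBy.exists_hasDerivAt {γ T : ℝ → ℝ} (h : VariationBoundedBy γ T) :
    ∃ g g' : ℝ → ℝ, (∀ x, HasDerivAt g (g' x) x) ∧ Continuous g' ∧
      (∀ x, |g' x| ≤ T (x + 2) - T x) ∧ ∀ x, |g x - γ x| ≤ T (x + 2) - T x := by
  have hγ := h.intervalIntegrable
  have hcont := continuous_unitAverage hγ
  have hnear : ∀ x, ∀ y ∈ Icc x (x + 1), ∀ z ∈ Icc x (x + 2),
      |unitAverage γ y - γ z| ≤ T (x + 2) - T x := fun x y hy z hz =>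
    abs_unitAverage_sub_le hγ fun w hw =>
      h.abs_sub_le_of_mem_Icc hz ⟨hy.1.trans hw.1, by linarith [hw.2, hy.2]⟩
  refine ⟨unitAverage (unitAverage γ), fun x => unitAverage γ (x + 1) - unitAverage γ x,
    hasDerivAt_unitAverage hcont, by fun_prop, fun x => ?_, fun x => ?_⟩
  · rw [abs_sub_comm]
    refine abs_unitAverage_sub_le hγ fun y hy => ?_
    rw [abs_sub_comm]
    exact hnear x (x + 1) ⟨by linarith, le_rfl⟩ y ⟨hy.1, by linarith [hy.2]⟩
  · exact abs_unitAverage_sub_le hcont.intervalIntegrable fun y hy =>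
      hnear x y hy x ⟨le_rfl, by linarith⟩

theorem VariationBoundedBy.exists_hasDerivAt_integrableOn {γ T : ℝ → ℝ} {X : ℝ} {p : ℕ}
    (h : VariationBoundedBy γ T) (hT : BddAbove (T '' Ioi X)) (hp : p ≠ 0)
    (hγp : IntegrableOn (fun x => |γ x| ^ p) (Ioi X)) (hγ0 : Tendsto γ atTop (𝓝 0)) :
    ∃ g g' : ℝ → ℝ, (∀ x, HasDerivAt g (g' x) x) ∧ IntegrableOn g' (Ioi X) ∧
      IntegrableOn (fun x => γ x - g x) (Ioi X) ∧ IntegrableOn (fun x => |g x| ^ p) (Ioi X) ∧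
        Tendsto g atTop (𝓝 0) := by
  obtain ⟨g, g', hg, hg'cont, hg', hgγ⟩ := h.exists_hasDerivAt
  have hgcont : Continuous g := continuous_iff_continuousAt.2 fun x => (hg x).continuousAt
  have hR := integrableOn_Ioi_sub_of_monotone h.monotone hT zero_le_two
  have hRp := h.integrableOn_Ioi_sub_pow hT zero_le_two hp
  refine ⟨g, g', hg, hR.mono' hg'cont.aestronglyMeasurable (.of_forall hg'),
    hR.mono' (h.measurable.sub hgcont.measurable).aestronglyMeasurable
      (.of_forall fun x => by rw [Real.norm_eq_abs, abs_sub_comm]; exact hgγ x),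
    ((hγp.add hRp).const_mul (2 ^ (p - 1))).mono' (hgcont.abs.pow p).aestronglyMeasurable
      (.of_forall fun x => ?_), ?_⟩
  · rw [Real.norm_of_nonneg (by positivity)]
    calc |g x| ^ p ≤ (|γ x| + (T (x + 2) - T x)) ^ p := by
          gcongr
          linarith [abs_sub_abs_le_abs_sub (g x) (γ x), hgγ x]
      _ ≤ _ := add_pow_le (abs_nonneg _) ((abs_nonneg _).trans (hgγ x)) p
  · have hdiff := squeeze_zero_norm (f := fun x => g x - γ x) hgγ
      (tendsto_sub_of_monotone h.monotone hT 2)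
    simpa using hdiff.add hγ0

end Smoothing

end BoundedVariation

section Gronwall

open Set Filter Topology

variable {s : Set ℝ}

theorem norm_sub_le_integral_of_hasDerivAt_off_countable {F : Type*} [NormedAddCommGroup F]
    [NormedSpace ℝ F] [CompleteSpace F] {f f' : ℝ → F} {B : ℝ → ℝ} {a b : ℝ} (hs : s.Countable)
    (hab : a ≤ b) (hc : ContinuousOn f (Icc a b))
    (hd : ∀ x ∈ Ioo a b \ s, HasDerivAt f (f' x) x) (hB : ∀ x ∈ Ioo a b \ s, ‖f' x‖ ≤ B x)
    (hBi : IntervalIntegrable B volume a b) : ‖f b - f a‖ ≤ ∫ x in a..b, B x := by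
  have hae : ∀ᵐ x ∂volume, x ∈ Ioc a b → ‖deriv f x‖ ≤ B x := by
    filter_upwards [hs.ae_notMem volume, (countable_singleton b).ae_notMem volume] with x hxs hxb hx
    have hx' : x ∈ Ioo a b \ s := ⟨⟨hx.1, hx.2.lt_of_ne hxb⟩, hxs⟩
    exact (hd x hx').deriv ▸ hB x hx'
  have hderiv : IntervalIntegrable (deriv f) volume a b :=
    hBi.mono_fun' (aestronglyMeasurable_deriv f _) <| by
      rwa [uIoc_of_le hab, EventuallyLE, ae_restrict_iff' measurableSet_Ioc]
  rw [← integral_eq_of_hasDerivAt_off_countable_of_le f (deriv f) hab hs hc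
    (fun x hx => (hd x hx).differentiableAt.hasDerivAt) hderiv]
  exact intervalIntegral.norm_integral_le_of_norm_le hab hae hBi

theorem le_two_mul_of_abs_deriv_le {h ε : ℝ → ℝ} {I : Set ℝ} [I.OrdConnected]
    (hs : s.Countable) (h0 : ∀ x ∈ I, 0 ≤ h x) (hc : ContinuousOn h I)
    (hd : ∀ x ∈ I \ s, ∃ d, HasDerivAt h d x ∧ |d| ≤ ε x * h x)
    (hε : IntegrableOn ε I) (hε1 : ∫ x in I, |ε x| ≤ 1 / 2) {x y : ℝ} (hx : x ∈ I) (hy : y ∈ I) :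
    h x ≤ 2 * h y := by
  have hJ : uIcc x y ⊆ I := OrdConnected.uIcc_subset ‹_› hx hy
  obtain ⟨m, hm, hmax⟩ := isCompact_uIcc.exists_isMaxOn nonempty_uIcc (hc.mono hJ)
  have hosc : ∀ c ∈ uIcc x y, ∀ d ∈ uIcc x y, c ≤ d → |h d - h c| ≤ h m / 2 := by
    intro c hc' d hd' hcd
    have hsub : Icc c d ⊆ uIcc x y := OrdConnected.out inferInstance hc' hd'
    have hsub' : Ioo c d \ s ⊆ I \ s :=
      sdiff_subset_sdiff_left (Ioo_subset_Icc_self.trans (hsub.trans hJ))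
    have hi : IntervalIntegrable (fun t => |ε t| * h m) volume c d :=
      ((intervalIntegrable_iff_integrableOn_Icc_of_le hcd).2
        (hε.mono_set (hsub.trans hJ))).abs.mul_const _
    calc |h d - h c| ≤ ∫ t in c..d, |ε t| * h m :=
          norm_sub_le_integral_of_hasDerivAt_off_countable hs hcd (hc.mono (hsub.trans hJ))
            (fun t ht => (hd t (hsub' ht)).choose_spec.1.differentiableAt.hasDerivAt)
            (fun t ht => by
              obtain ⟨d, htd, hdb⟩ := hd t (hsub' ht)
              have hmt := hsub (Ioo_subset_Icc_self ht.1)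
              have := h0 t (hJ hmt)
              rw [htd.deriv]
              refine hdb.trans ?_
              gcongr
              exacts [le_abs_self _, hmax hmt]) hi
      _ = (∫ t in Icc c d, |ε t|) * h m := by
          rw [intervalIntegral.integral_mul_const, intervalIntegral.integral_of_le hcd,
            integral_Icc_eq_integral_Ioc]
      _ ≤ 1 / 2 * h m := by
          gcongr
          · exact h0 m (hJ hm)
          · exact (setIntegral_mono_set hε.abs (ae_of_all _ fun _ => abs_nonneg _)
              (hsub.trans hJ).eventuallyLE).trans hε1
      _ = h m / 2 := by ring
  have hmy : |h m - h y| ≤ h m / 2 := by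
    rcases le_total y m with hle | hle
    · exact hosc y right_mem_uIcc m hm hle
    · exact abs_sub_comm (h y) (h m) ▸ hosc m hm y right_mem_uIcc hle
  have hxm : h x ≤ h m := hmax left_mem_uIcc
  linarith [le_abs_self (h m - h y)]

theorem exists_eventually_le_of_abs_deriv_le {h ε : ℝ → ℝ} {X : ℝ} (hs : s.Countable)
    (h0 : ∀ x > X, 0 ≤ h x) (hc : ContinuousOn h (Ioi X))
    (hd : ∀ x > X, x ∉ s → ∃ d, HasDerivAt h d x ∧ |d| ≤ ε x * h x)
    (hε : IntegrableOn ε (Ioi X)) : ∃ C, ∀ᶠ x in atTop, h x ≤ C := by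
  have htail : ∀ᶠ Y in atTop, ∫ x in Ici Y, |ε x| ≤ 1 / 2 :=
    (tendsto_integral_Ici_zero tendsto_id).eventually_le_const one_half_pos
  obtain ⟨Y, hY, hXY⟩ := (htail.and (eventually_gt_atTop X)).exists
  have hsub : Ici Y ⊆ Ioi X := fun x hx => hXY.trans_le hx
  refine ⟨2 * h Y, (eventually_ge_atTop Y).mono fun x hx => ?_⟩
  exact le_two_mul_of_abs_deriv_le hs (fun z hz => h0 z (hsub hz)) (hc.mono hsub)
    (fun z hz => hd z (hsub hz.1) hz.2) (hε.mono_set hsub) hY hx self_mem_Ici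

theorem exists_forall_norm_le_of_eventually {F : Type*} [NormedAddCommGroup F] {f : ℝ → F} {a : ℝ}
    (hc : ContinuousOn f (Ioi a)) (h0 : ∃ C, ∀ᶠ x in 𝓝[>] a, ‖f x‖ ≤ C)
    (h1 : ∃ C, ∀ᶠ x in atTop, ‖f x‖ ≤ C) : ∃ C, ∀ x ∈ Ioi a, ‖f x‖ ≤ C := by
  obtain ⟨C₀, h0⟩ := h0
  obtain ⟨C₁, h1⟩ := h1
  obtain ⟨b, hab, hb⟩ := mem_nhdsGT_iff_exists_Ioo_subset.1 h0
  obtain ⟨Y, hY⟩ := eventually_atTop.1 h1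
  obtain ⟨C₂, h2⟩ := isCompact_Icc.exists_bound_of_continuousOn
    (hc.mono fun x (hx : x ∈ Icc b Y) => lt_of_lt_of_le hab hx.1)
  refine ⟨max C₀ (max C₁ C₂), fun x hx => ?_⟩
  rcases lt_or_ge x b with hxb | hbx
  · exact (hb ⟨hx, hxb⟩).trans (le_max_left _ _)
  · refine le_max_of_le_right ?_
    rcases le_total x Y with hxY | hYx
    · exact (h2 x ⟨hbx, hxY⟩).trans (le_max_right _ _)
    · exact (hY x hYx).trans (le_max_left _ _)

end Gronwall

section RealSolutions

open Set Filter Topology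

/-- Real-valued solutions, with derivative `u'`, of `-u'' + V u = E u` on `(X, ∞)`, where the
equation is required to hold in the classical sense outside an exceptional set `s`. -/
structure IsSolutionOff (V : ℝ → ℝ) (E X : ℝ) (s : Set ℝ) (u u' : ℝ → ℝ) : Prop where
  hasDerivAt : ∀ x > X, HasDerivAt u (u' x) x
  continuousOn_deriv : ContinuousOn u' (Ioi X)
  hasDerivAt_deriv : ∀ x > X, x ∉ s → HasDerivAt u' ((V x - E) * u x) x

namespace IsSolutionOff

variable {V : ℝ → ℝ} {E X : ℝ} {s : Set ℝ} {u u' : ℝ → ℝ}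

theorem continuousOn (hu : IsSolutionOff V E X s u u') : ContinuousOn u (Ioi X) := fun x hx =>
  (hu.hasDerivAt x hx).continuousAt.continuousWithinAt

theorem mono (hu : IsSolutionOff V E X s u u') {Y : ℝ} (hXY : X ≤ Y) :
    IsSolutionOff V E Y s u u' where
  hasDerivAt x hx := hu.hasDerivAt x (hXY.trans_lt hx)
  continuousOn_deriv := hu.continuousOn_deriv.mono (Ioi_subset_Ioi hXY)
  hasDerivAt_deriv x hx := hu.hasDerivAt_deriv x (hXY.trans_lt hx)

theorem exists_hasDerivAt_energy (hu : IsSolutionOff V E X s u u') {x M : ℝ} (hx : X < x)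
    (hxs : x ∉ s) (hM : |V x| ≤ M) :
    ∃ d, HasDerivAt (fun y => u y ^ 2 + u' y ^ 2) d x ∧
      |d| ≤ (1 + M + |E|) * (u x ^ 2 + u' x ^ 2) := by
  refine ⟨_, ((hu.hasDerivAt x hx).pow 2).add ((hu.hasDerivAt_deriv x hx hxs).pow 2), ?_⟩
  have hprod : |2 * u x * u' x| ≤ u x ^ 2 + u' x ^ 2 := by
    rw [← sq_abs (u x), ← sq_abs (u' x), abs_mul, abs_mul, abs_two]
    exact two_mul_le_add_sq _ _
  have hcoef : |1 + V x - E| ≤ 1 + M + |E| :=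
    calc |1 + V x - E| ≤ |1 + V x| + |E| := abs_sub _ _
      _ ≤ |1| + |V x| + |E| := by gcongr; exact abs_add_le _ _
      _ ≤ 1 + M + |E| := by rw [abs_one]; gcongr
  calc |_| = |1 + V x - E| * |2 * u x * u' x| := by rw [← abs_mul]; congr 1; push_cast; ring
    _ ≤ _ := mul_le_mul hcoef hprod (abs_nonneg _) ((abs_nonneg _).trans hcoef)

theorem exists_eventually_abs_le_nhdsGT (hu : IsSolutionOff V E X s u u') (hs : s.Countable)
    {M : ℝ} (hM : ∀ x > X, |V x| ≤ M) : ∃ C, ∀ᶠ x in 𝓝[>] X, |u x| ≤ C := by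
  set K := 1 + M + |E|
  have hM0 : 0 ≤ M := (abs_nonneg _).trans (hM (X + 1) (lt_add_one X))
  have hK : 0 < K := by positivity
  set b := X + 1 / (2 * K)
  have hXb : X < b := lt_add_of_pos_right X (by positivity)
  have hb : ∫ _ in Ioc X b, |K| = 1 / 2 := by
    rw [setIntegral_const, Real.volume_real_Ioc_of_le hXb.le, abs_of_pos hK, smul_eq_mul]
    simp only [b]
    field_simp
    ring
  refine ⟨_, mem_of_superset (Ioc_mem_nhdsGT hXb) fun x hx => Real.abs_le_sqrt (le_trans ?_
    (le_two_mul_of_abs_deriv_le (ε := fun _ => K) hs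
      (fun _ _ => add_nonneg (sq_nonneg _) (sq_nonneg _))
      (((hu.continuousOn.pow 2).add (hu.continuousOn_deriv.pow 2)).mono Ioc_subset_Ioi_self)
      (fun y hy => hu.exists_hasDerivAt_energy hy.1.1 hy.2 (hM y hy.1.1))
      (integrableOn_const (by simp)) hb.le hx (right_mem_Ioc.2 hXb)))⟩
  exact le_add_of_nonneg_right (sq_nonneg (u' x))

end IsSolutionOff

end RealSolutions

section Riccati

open Set Filter Topology ComplexConjugate

/-- The vector field of the Riccati equation `v' = -2ik v - i r (1 - v)²`, which, for
`r = V / (2k)`, is satisfied by `v = (u' - iku) / (u' + iku)` for every real solution `u` of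
`-u'' + V u = k² u`. -/
noncomputable def riccatiField (k r : ℝ) (v : ℂ) : ℂ :=
  -Complex.I * (2 * k) * v - Complex.I * r * (1 - v) ^ 2

/-- The defect of `v` from being the quotient of `w̄ = u' - iku` by `w = u' + iku`. -/
noncomputable def riccatiDefect (v w : ℝ → ℂ) (x : ℝ) : ℂ := conj (w x) - v x * w x

theorem norm_le_two_mul_norm_riccatiDefect {v w : ℝ → ℂ} {x : ℝ} (hv : ‖v x‖ ≤ 1 / 2) :
    ‖w x‖ ≤ 2 * ‖riccatiDefect v w x‖ := by
  have h : ‖w x‖ - ‖v x‖ * ‖w x‖ ≤ ‖riccatiDefect v w x‖ := by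
    simpa only [riccatiDefect, norm_mul, RCLike.norm_conj] using
      norm_sub_norm_le (conj (w x)) (v x * w x)
  nlinarith [norm_nonneg (w x)]

theorem re_conj_mul_mul_sub (g a d : ℂ) :
    (conj g * (a * g - d)).re = a.re * ‖g‖ ^ 2 - (conj g * d).re := by
  rw [mul_sub, Complex.sub_re, mul_left_comm, Complex.conj_mul', ← Complex.ofReal_pow,
    Complex.re_mul_ofReal]

theorem re_conj_mul_riccatiField_add (k r : ℝ) (v e : ℂ) :
    (conj v * (riccatiField k r v + e)).re =
      -(r * v.im * (1 - ‖v‖ ^ 2)) + (conj v * e).re := by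
  rw [riccatiField, ← Complex.normSq_eq_norm_sq, Complex.normSq_apply]
  simp [pow_two]
  ring

variable {k r : ℝ} {v w : ℝ → ℂ} {e : ℂ} {x : ℝ}

theorem hasDerivAt_riccatiDefect
    (hw : HasDerivAt w (Complex.I * k * w x - Complex.I * r * (w x - conj (w x))) x)
    (hv : HasDerivAt v (riccatiField k r (v x) + e) x) :
    HasDerivAt (riccatiDefect v w)
      ((-Complex.I * k + Complex.I * r * (1 - v x)) * riccatiDefect v w x - e * w x)
      x := by
  refine (hw.star.sub (hv.mul hw)).congr_deriv ?_
  simp only [riccatiDefect, riccatiField, Complex.star_def, map_sub, map_mul, Complex.conj_I,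
    Complex.conj_ofReal, Complex.conj_conj]
  ring

theorem hasDerivAt_norm_riccatiDefect_sq_div
    (hw : HasDerivAt w (Complex.I * k * w x - Complex.I * r * (w x - conj (w x))) x)
    (hv : HasDerivAt v (riccatiField k r (v x) + e) x) (hv1 : 1 - ‖v x‖ ^ 2 ≠ 0) :
    HasDerivAt (fun y => ‖riccatiDefect v w y‖ ^ 2 / (1 - ‖v y‖ ^ 2))
      (2 * (‖riccatiDefect v w x‖ ^ 2 * (conj (v x) * e).re -
        (1 - ‖v x‖ ^ 2) * (conj (riccatiDefect v w x) * (e * w x)).re) /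
          (1 - ‖v x‖ ^ 2) ^ 2) x := by
  have hre : (-Complex.I * k + Complex.I * r * (1 - v x)).re = r * (v x).im := by
    simp
  refine ((hasDerivAt_riccatiDefect hw hv).norm_sq.div (hv.norm_sq.const_sub 1) hv1).congr_deriv ?_
  rw [Complex.inner, Complex.inner, mul_comm _ (conj _), mul_comm _ (conj _), re_conj_mul_mul_sub,
    re_conj_mul_riccatiField_add, hre]
  ring

-- The terms involving `V` cancel in the derivative of `|g|² / (1 - |v|²)`; only `e` remains.
theorem exists_hasDerivAt_norm_riccatiDefect_sq_div
    (hw : HasDerivAt w (Complex.I * k * w x - Complex.I * r * (w x - conj (w x))) x)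
    (hv : HasDerivAt v (riccatiField k r (v x) + e) x) (hv1 : ‖v x‖ ≤ 1 / 2) :
    ∃ d, HasDerivAt (fun y => ‖riccatiDefect v w y‖ ^ 2 / (1 - ‖v y‖ ^ 2)) d x ∧
      |d| ≤ 6 * ‖e‖ * (‖riccatiDefect v w x‖ ^ 2 / (1 - ‖v x‖ ^ 2)) := by
  have hN : 3 / 4 ≤ 1 - ‖v x‖ ^ 2 := by nlinarith [norm_nonneg (v x)]
  refine ⟨_, hasDerivAt_norm_riccatiDefect_sq_div hw hv (by linarith), ?_⟩
  set N := 1 - ‖v x‖ ^ 2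
  set g := riccatiDefect v w x
  have hgw : |(conj g * (e * w x)).re| ≤ 2 * ‖e‖ * ‖g‖ ^ 2 :=
    calc |(conj g * (e * w x)).re| ≤ ‖g‖ * (‖e‖ * ‖w x‖) := by
          simpa only [norm_mul, RCLike.norm_conj] using
            Complex.abs_re_le_norm (conj g * (e * w x))
      _ ≤ ‖g‖ * (‖e‖ * (2 * ‖g‖)) := by
          gcongr
          exact norm_le_two_mul_norm_riccatiDefect hv1
      _ = 2 * ‖e‖ * ‖g‖ ^ 2 := by ring
  have hve : |(conj (v x) * e).re| ≤ 1 / 2 * ‖e‖ :=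
    (Complex.abs_re_le_norm _).trans <| by
      rw [norm_mul, RCLike.norm_conj]
      gcongr
  have hnum : |2 * (‖g‖ ^ 2 * (conj (v x) * e).re - N * (conj g * (e * w x)).re)| ≤
      ‖e‖ * ‖g‖ ^ 2 * (4 * N + 1) :=
    calc _ ≤ 2 * (‖g‖ ^ 2 * |(conj (v x) * e).re| + N * |(conj g * (e * w x)).re|) := by
          rw [abs_mul, abs_two]
          gcongr
          refine (abs_sub _ _).trans_eq ?_
          rw [abs_mul, abs_mul, abs_of_nonneg (sq_nonneg ‖g‖), abs_of_pos (by linarith : 0 < N)]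
      _ ≤ 2 * (‖g‖ ^ 2 * (1 / 2 * ‖e‖) + N * (2 * ‖e‖ * ‖g‖ ^ 2)) := by gcongr
      _ = _ := by ring
  calc _ ≤ ‖e‖ * ‖g‖ ^ 2 * (4 * N + 1) / N ^ 2 := by
        rw [abs_div, abs_of_nonneg (sq_nonneg N)]
        gcongr
    _ ≤ ‖e‖ * ‖g‖ ^ 2 * (6 * N) / N ^ 2 := by gcongr; linarith
    _ = 6 * ‖e‖ * (‖g‖ ^ 2 / N) := by
        field_simp

theorem IsSolutionOff.exists_eventually_abs_le_atTop {V ε u u' : ℝ → ℝ} {e : ℝ → ℂ} {k X : ℝ}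
    {s : Set ℝ} (hu : IsSolutionOff V (k ^ 2) X s u u') (hs : s.Countable) (hk : k ≠ 0)
    (hv : ∀ x > X, HasDerivAt v (riccatiField k (V x / (2 * k)) (v x) + e x) x)
    (hv1 : ∀ x > X, ‖v x‖ ≤ 1 / 2) (hε : IntegrableOn ε (Ioi X)) (he : ∀ x > X, ‖e x‖ ≤ ε x) :
    ∃ C, ∀ᶠ x in atTop, |u x| ≤ C := by
  have hkC : (k : ℂ) ≠ 0 := by exact_mod_cast hk
  set w : ℝ → ℂ := fun x => u' x + Complex.I * k * u x with hw
  have hwd : ∀ x > X, x ∉ s → HasDerivAt w (Complex.I * k * w x -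
      Complex.I * (V x / (2 * k) : ℝ) * (w x - conj (w x))) x := fun x hx hxs => by
    refine ((hu.hasDerivAt_deriv x hx hxs).ofReal_comp.add
      ((hu.hasDerivAt x hx).ofReal_comp.const_mul (Complex.I * k))).congr_deriv ?_
    simp only [hw, map_add, map_mul, Complex.conj_I, Complex.conj_ofReal]
    push_cast
    field_simp
    ring_nf
    rw [Complex.I_sq]
    ring
  have hwc : ContinuousOn w (Ioi X) :=
    (Complex.continuous_ofReal.comp_continuousOn hu.continuousOn_deriv).add
      (continuousOn_const.mul (Complex.continuous_ofReal.comp_continuousOn hu.continuousOn))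
  have hvc : ContinuousOn v (Ioi X) := fun x hx => (hv x hx).continuousAt.continuousWithinAt
  have hN : ∀ x > X, 3 / 4 ≤ 1 - ‖v x‖ ^ 2 := fun x hx => by nlinarith [norm_nonneg (v x), hv1 x hx]
  obtain ⟨C, hC⟩ : ∃ C, ∀ᶠ x in atTop, ‖riccatiDefect v w x‖ ^ 2 / (1 - ‖v x‖ ^ 2) ≤ C := by
    refine exists_eventually_le_of_abs_deriv_le (ε := fun x => 6 * ε x) hs
      (fun x hx => div_nonneg (sq_nonneg _) (by linarith [hN x hx]))
      ((((Complex.continuous_conj.comp_continuousOn hwc).sub (hvc.mul hwc)).norm.pow 2).div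
        (continuousOn_const.sub (hvc.norm.pow 2)) fun x hx => by linarith [hN x hx])
      (fun x hx hxs => ?_) (hε.const_mul 6)
    obtain ⟨d, hd, hdb⟩ :=
      exists_hasDerivAt_norm_riccatiDefect_sq_div (hwd x hx hxs) (hv x hx) (hv1 x hx)
    refine ⟨d, hd, hdb.trans ?_⟩
    gcongr
    exacts [div_nonneg (sq_nonneg _) (by linarith [hN x hx]), he x hx]
  refine ⟨2 * √C / |k|, ?_⟩
  filter_upwards [hC, eventually_gt_atTop X] with x hx hxX
  have hg : ‖riccatiDefect v w x‖ ^ 2 ≤ C := le_trans (le_div_self (sq_nonneg _)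
    (by linarith [hN x hxX]) (by linarith [sq_nonneg ‖v x‖])) hx
  rw [le_div_iff₀ (abs_pos.2 hk), mul_comm]
  calc |k| * |u x| = |(w x).im| := by simp [hw, abs_mul]
    _ ≤ ‖w x‖ := Complex.abs_im_le_norm _
    _ ≤ 2 * ‖riccatiDefect v w x‖ := norm_le_two_mul_norm_riccatiDefect (hv1 x hxX)
    _ ≤ 2 * √C := by gcongr; exact Real.le_sqrt_of_sq_le hg

end Riccati

section WeakSolutions

open Set Filter Topology

namespace IsWeakSolution

variable {V : ℝ → ℝ} {E : ℝ} {u u' : ℝ → ℂ}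

theorem deriv_eq_integral (h : IsWeakSolution V E u u') {a y : ℝ} (ha : 0 < a) (hy : a ≤ y) :
    u' y = u' a + ∫ t in a..y, ((V t : ℂ) * u t - (E : ℂ) * u t) := by
  rw [← (h.2 a y ha hy).2, add_sub_cancel]

theorem continuousOn_deriv (h : IsWeakSolution V E u u') : ContinuousOn u' (Ioi 0) := by
  intro x (hx : 0 < x)
  have hle : x / 2 ≤ x + 1 := by linarith
  have hn : Icc (x / 2) (x + 1) ∈ 𝓝 x := Icc_mem_nhds (half_lt_self hx) (lt_add_one x)
  have hprim := (intervalIntegral.continuousOn_primitive_interval'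
    (h.2 _ _ (half_pos hx) hle).1 left_mem_uIcc).const_add (u' (x / 2))
  rw [uIcc_of_le hle] at hprim
  refine ((hprim.continuousAt hn).congr ?_).continuousWithinAt
  filter_upwards [hn] with y hy using (h.deriv_eq_integral (half_pos hx) hy.1).symm

theorem hasDerivAt_deriv (h : IsWeakSolution V E u u') {x : ℝ} (hx : 0 < x)
    (hV : ContinuousAt V x) : HasDerivAt u' (((V x - E : ℝ) : ℂ) * u x) x := by
  have hle : x / 2 ≤ x + 1 := by linarith
  have hn : Ioc (x / 2) (x + 1) ∈ 𝓝 x := Ioc_mem_nhds (half_lt_self hx) (lt_add_one x)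
  have hmeas := ((intervalIntegrable_iff_integrableOn_Ioc_of_le hle).1
    (h.2 _ _ (half_pos hx) hle).1).aestronglyMeasurable
  have hu := (h.1 x hx).continuousAt
  have hVc : ContinuousAt (fun t => (V t : ℂ)) x := Complex.continuous_ofReal.continuousAt.comp hV
  have hd := (intervalIntegral.integral_hasDerivAt_right
    (h.2 _ _ (half_pos hx) (half_le_self hx.le)).1
    (AEStronglyMeasurable.stronglyMeasurableAtFilter_of_mem hmeas hn)
    ((hVc.mul hu).sub (continuousAt_const.mul hu))).const_add (u' (x / 2))
  refine (hd.congr_deriv (by push_cast; ring)).congr_of_eventuallyEq ?_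
  filter_upwards [hn] with y hy using h.deriv_eq_integral (half_pos hx) hy.1.le

variable {s : Set ℝ}

theorem isSolutionOff_re (h : IsWeakSolution V E u u')
    (hs : ∀ x > 0, x ∉ s → ContinuousAt V x) :
    IsSolutionOff V E 0 s (fun x => (u x).re) (fun x => (u' x).re) where
  hasDerivAt x hx := Complex.reCLM.hasFDerivAt.comp_hasDerivAt x (h.1 x hx)
  continuousOn_deriv := Complex.continuous_re.comp_continuousOn h.continuousOn_deriv
  hasDerivAt_deriv x hx hxs := by
    simpa only [Complex.reCLM_apply, Complex.re_ofReal_mul, Function.comp_def] using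
      Complex.reCLM.hasFDerivAt.comp_hasDerivAt x (h.hasDerivAt_deriv hx (hs x hx hxs))

theorem isSolutionOff_im (h : IsWeakSolution V E u u')
    (hs : ∀ x > 0, x ∉ s → ContinuousAt V x) :
    IsSolutionOff V E 0 s (fun x => (u x).im) (fun x => (u' x).im) where
  hasDerivAt x hx := Complex.imCLM.hasFDerivAt.comp_hasDerivAt x (h.1 x hx)
  continuousOn_deriv := Complex.continuous_im.comp_continuousOn h.continuousOn_deriv
  hasDerivAt_deriv x hx hxs := by
    simpa only [Complex.imCLM_apply, Complex.im_ofReal_mul, Function.comp_def] using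
      Complex.imCLM.hasFDerivAt.comp_hasDerivAt x (h.hasDerivAt_deriv hx (hs x hx hxs))

theorem exists_forall_norm_le (h : IsWeakSolution V E u u') (hs : s.Countable)
    (hVc : ∀ x > 0, x ∉ s → ContinuousAt V x) {M : ℝ} (hM : ∀ x > 0, |V x| ≤ M)
    (hbdd : ∀ w w', IsSolutionOff V E 0 s w w' → ∃ C, ∀ᶠ x in atTop, |w x| ≤ C) :
    ∃ C, ∀ x ∈ Ioi (0 : ℝ), ‖u x‖ ≤ C := by
  have hreal : ∀ w w', IsSolutionOff V E 0 s w w' → ∃ C, ∀ x ∈ Ioi (0 : ℝ), |w x| ≤ C :=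
    fun w w' hw => exists_forall_norm_le_of_eventually hw.continuousOn
      (hw.exists_eventually_abs_le_nhdsGT hs hM) (hbdd w w' hw)
  obtain ⟨C₁, h1⟩ := hreal _ _ (h.isSolutionOff_re hVc)
  obtain ⟨C₂, h2⟩ := hreal _ _ (h.isSolutionOff_im hVc)
  exact ⟨C₁ + C₂, fun x hx => (Complex.norm_le_abs_re_add_abs_im _).trans
    (add_le_add (h1 x hx) (h2 x hx))⟩

end IsWeakSolution

end WeakSolutions

section Trees

open Set Finset

variable {κ : Type*} {c : κ → ℂ} {φ b : κ → ℝ} {η L : ℝ} {q : ℕ}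

/-- The frequency of a labelled tree: the sum of the frequencies of its labels. -/
def treeFreq (φ : κ → ℝ) : BinaryTree κ → ℝ
  | .nil => 0
  | .node k l r => φ k + treeFreq φ l + treeFreq φ r

/-- The weight of a labelled tree: the product of the weights of its labels. -/
def treeWeight (b : κ → ℝ) : BinaryTree κ → ℝ
  | .nil => 1
  | .node k l r => b k * treeWeight b l * treeWeight b r

/-- The coefficients of the formal expansion `y = ∑ g ^ |t| treeCoef t exp (-i (treeFreq t) x)`
over labelled trees of the solution of `y' = iη (1 - y) + (i / η) g W y²`, where
`W = ∑ c k exp (-i (φ k) x)` and `g` is treated as a constant. -/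
noncomputable def treeCoef (c : κ → ℂ) (φ : κ → ℝ) (η : ℝ) : BinaryTree κ → ℂ
  | .nil => 1
  | .node k l r => c k * treeCoef c φ η l * treeCoef c φ η r /
      (η * (η - treeFreq φ (.node k l r)) : ℝ)

/-- Labelled trees with `m + 1` nodes, split into the label of the root and its two subtrees. -/
def nodeEquiv (κ : Type*) (m : ℕ) : {t : BinaryTree κ // t.numNodes = m + 1} ≃
    Σ p : antidiagonal m, κ × {l : BinaryTree κ // l.numNodes = p.1.1} ×
      {r : BinaryTree κ // r.numNodes = p.1.2} where
  toFun
    | ⟨.node k l r, h⟩ => ⟨⟨(l.numNodes, r.numNodes), mem_antidiagonal.2 (Nat.succ_injective h)⟩,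
        k, ⟨l, rfl⟩, ⟨r, rfl⟩⟩
  invFun p := ⟨.node p.2.1 p.2.2.1 p.2.2.2, by
    rw [BinaryTree.numNodes, p.2.2.1.2, p.2.2.2.2, mem_antidiagonal.1 p.1.2]⟩
  left_inv := by rintro ⟨_ | ⟨k, l, r⟩, h⟩ <;> [cases h; rfl]
  right_inv := by
    rintro ⟨⟨⟨i, j⟩, h⟩, k, ⟨l, hl⟩, ⟨r, hr⟩⟩
    change l.numNodes = i at hl
    change r.numNodes = j at hr
    subst hl hr
    rfl

theorem treeWeight_pos (hb : ∀ k, 0 < b k) : ∀ t, 0 < treeWeight b t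
  | .nil => one_pos
  | .node k l r => mul_pos (mul_pos (hb k) (treeWeight_pos hb l)) (treeWeight_pos hb r)

theorem treeWeight_le_one (hb : ∀ k, 0 < b k) (hb1 : ∀ k, b k ≤ 1) : ∀ t, treeWeight b t ≤ 1
  | .nil => le_rfl
  | .node k l r => mul_le_one₀ (mul_le_one₀ (hb1 k) (treeWeight_pos hb l).le
      (treeWeight_le_one hb hb1 l)) (treeWeight_pos hb r).le (treeWeight_le_one hb hb1 r)

theorem treeWeight_rpow (hb : ∀ k, 0 < b k) (β : ℝ) :
    ∀ t, treeWeight b t ^ β = treeWeight (fun k => b k ^ β) t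
  | .nil => Real.one_rpow β
  | .node k l r => by
    rw [treeWeight, treeWeight, Real.mul_rpow (mul_pos (hb k) (treeWeight_pos hb l)).le
      (treeWeight_pos hb r).le, Real.mul_rpow (hb k).le (treeWeight_pos hb l).le,
      treeWeight_rpow hb β l, treeWeight_rpow hb β r]

theorem summable_treeWeight (hb : ∀ k, 0 < b k) (hsum : Summable b) (m : ℕ) :
    Summable fun t : {t : BinaryTree κ // t.numNodes = m} => treeWeight b t := by
  induction m using Nat.strong_induction_on with
  | _ m ih =>
    cases m with
    | zero =>
      have : Subsingleton {t : BinaryTree κ // t.numNodes = 0} :=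
        ⟨by rintro ⟨_ | _, h⟩ ⟨_ | _, h'⟩ <;> [rfl; cases h'; cases h; cases h]⟩
      exact .of_finite
    | succ m =>
      have hw0 : ∀ t, 0 ≤ treeWeight b t := fun t => (treeWeight_pos hb t).le
      refine (nodeEquiv κ m).symm.summable_iff.1
        ((summable_sigma_of_nonneg fun _ => hw0 _).2 ⟨fun ⟨p, hp⟩ => ?_, .of_finite⟩)
      have hl := ih p.1 (Nat.antidiagonal.fst_lt hp)
      have hr := ih p.2 (Nat.antidiagonal.snd_lt hp)
      refine (hsum.mul_of_nonneg (hl.mul_of_nonneg hr (fun _ => hw0 _) (fun _ => hw0 _))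
        (fun k => (hb k).le) (fun p => mul_nonneg (hw0 p.1) (hw0 p.2))).congr fun p => ?_
      exact (mul_assoc _ _ _).symm

/-- A frequency `η` is nonresonant if the small divisors `η - treeFreq φ t` do not vanish and are
controlled by the weights of the trees, separately for each number of nodes. -/
def IsNonresonant (b φ : κ → ℝ) (η : ℝ) : Prop :=
  ∀ m : ℕ, (∀ t : {t : BinaryTree κ // t.numNodes = m}, η ≠ treeFreq φ t) ∧
    Summable fun t : {t : BinaryTree κ // t.numNodes = m} => treeWeight b t / dist η (treeFreq φ t)

theorem IsNonresonant.exists_treeWeight_le (h : IsNonresonant b φ η) (hb : ∀ k, 0 < b k) (m : ℕ) :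
    ∃ K ≥ 0, ∀ t : BinaryTree κ, t.numNodes = m →
      treeWeight b t ≤ K * |η - treeFreq φ t| := by
  obtain ⟨hne, hsum⟩ := h m
  have h0 : ∀ t : {t : BinaryTree κ // t.numNodes = m},
      0 ≤ treeWeight b t / dist η (treeFreq φ t) := fun t =>
    div_nonneg (treeWeight_pos hb t).le dist_nonneg
  refine ⟨∑' t : {t : BinaryTree κ // t.numNodes = m}, treeWeight b t / dist η (treeFreq φ t),
    tsum_nonneg h0, fun t ht => ?_⟩
  have hdist : 0 < dist η (treeFreq φ t) := dist_pos.2 (hne ⟨t, ht⟩)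
  rw [← Real.dist_eq, ← div_le_iff₀ hdist]
  exact hsum.le_tsum ⟨t, ht⟩ fun t _ => h0 t

theorem abs_mul_norm_treeCoef_node_le (hη : 0 < η) (hb : ∀ k, 0 < b k) (hb1 : ∀ k, b k ≤ 1)
    (hc : ∀ k, ‖c k‖ ≤ L * b k ^ q) {k : κ} {l r : BinaryTree κ} {B : ℝ}
    (hl : ‖treeCoef c φ η l‖ ≤ B * treeWeight b l ^ (q - l.numNodes))
    (hr : ‖treeCoef c φ η r‖ ≤ B * treeWeight b r ^ (q - r.numNodes))
    (hne : η ≠ treeFreq φ (.node k l r)) :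
    |η - treeFreq φ (.node k l r)| * ‖treeCoef c φ η (.node k l r)‖ ≤
      L * B ^ 2 / η * treeWeight b (.node k l r) ^ (q - (l.numNodes + r.numNodes)) := by
  have hd : |η - treeFreq φ (.node k l r)| ≠ 0 := abs_ne_zero.2 (sub_ne_zero.2 hne)
  have hL : 0 ≤ L := nonneg_of_mul_nonneg_left ((norm_nonneg _).trans (hc k)) (pow_pos (hb k) _)
  have hB : 0 ≤ B := nonneg_of_mul_nonneg_left ((norm_nonneg _).trans hl)
    (pow_pos (treeWeight_pos hb l) _)
  set n := q - (l.numNodes + r.numNodes)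
  have hpow : ∀ {t : BinaryTree κ} {i}, n ≤ i → treeWeight b t ^ i ≤ treeWeight b t ^ n :=
    pow_le_pow_of_le_one (treeWeight_pos hb _).le (treeWeight_le_one hb hb1 _)
  have hk' : ‖c k‖ ≤ L * b k ^ n := (hc k).trans <|
    mul_le_mul_of_nonneg_left (pow_le_pow_of_le_one (hb k).le (hb1 k) (Nat.sub_le _ _)) hL
  have hl' : ‖treeCoef c φ η l‖ ≤ B * treeWeight b l ^ n := hl.trans <|
    mul_le_mul_of_nonneg_left (hpow (by omega)) hB
  have hr' : ‖treeCoef c φ η r‖ ≤ B * treeWeight b r ^ n := hr.trans <|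
    mul_le_mul_of_nonneg_left (hpow (by omega)) hB
  calc |η - treeFreq φ (.node k l r)| * ‖treeCoef c φ η (.node k l r)‖
      = ‖c k‖ * ‖treeCoef c φ η l‖ * ‖treeCoef c φ η r‖ / η := by
        rw [treeCoef, norm_div, norm_mul, norm_mul, Complex.norm_real, Real.norm_eq_abs, abs_mul,
          abs_of_pos hη]
        field_simp
    _ ≤ L * b k ^ n * (B * treeWeight b l ^ n) * (B * treeWeight b r ^ n) / η := by
        have hbn := pow_nonneg (hb k).le n
        have hwn := pow_nonneg (treeWeight_pos hb l).le n
        gcongr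
    _ = L * B ^ 2 / η * treeWeight b (.node k l r) ^ n := by
        rw [treeWeight, mul_pow, mul_pow]
        ring

theorem IsNonresonant.exists_norm_treeCoef_le (h : IsNonresonant b φ η) (hη : 0 < η)
    (hb : ∀ k, 0 < b k) (hb1 : ∀ k, b k ≤ 1) (hc : ∀ k, ‖c k‖ ≤ L * b k ^ q) {n : ℕ}
    (hn : n ≤ q) :
    ∃ B, ∀ t : BinaryTree κ, t.numNodes ≤ n →
      ‖treeCoef c φ η t‖ ≤ B * treeWeight b t ^ (q - t.numNodes) := by
  induction n with
  | zero => exact ⟨1, by rintro (_ | _) ht <;> [simp [treeCoef, treeWeight]; cases ht]⟩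
  | succ n ih =>
    obtain ⟨B, hB⟩ := ih (by omega)
    obtain ⟨K, -, hK⟩ := h.exists_treeWeight_le hb (n + 1)
    refine ⟨max B (L * B ^ 2 / η * K), fun t ht => ?_⟩
    have hw := treeWeight_pos hb t
    obtain ht | ht := Nat.le_succ_iff.1 ht
    · exact (hB t ht).trans (by gcongr; exact le_max_left _ _)
    obtain _ | ⟨k, l, r⟩ := t
    · cases ht
    have hlr : l.numNodes + r.numNodes = n := Nat.succ_injective ht
    have hne := (h _).1 ⟨.node k l r, ht⟩
    have hL : 0 ≤ L := nonneg_of_mul_nonneg_left ((norm_nonneg _).trans (hc k)) (pow_pos (hb k) _)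
    refine le_of_mul_le_mul_left ?_ (abs_pos.2 (sub_ne_zero.2 hne))
    set d := |η - treeFreq φ (.node k l r)|
    set w := treeWeight b (.node k l r)
    calc d * ‖treeCoef c φ η (.node k l r)‖
        ≤ L * B ^ 2 / η * w ^ (q - n) := hlr ▸ abs_mul_norm_treeCoef_node_le hη hb hb1 hc
          (hB l (by omega)) (hB r (by omega)) hne
      _ = L * B ^ 2 / η * w ^ (q - (n + 1)) * w := by
        rw [mul_assoc, ← pow_succ, show q - (n + 1) + 1 = q - n by omega]
      _ ≤ L * B ^ 2 / η * w ^ (q - (n + 1)) * (K * d) := by gcongr; exact hK _ ht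
      _ = d * (L * B ^ 2 / η * K * w ^ (q - (n + 1))) := by ring
      _ ≤ _ := by rw [ht]; gcongr; exact le_max_right _ _

theorem IsNonresonant.exists_abs_mul_norm_treeCoef_le (h : IsNonresonant b φ η) (hη : 0 < η)
    (hb : ∀ k, 0 < b k) (hb1 : ∀ k, b k ≤ 1) (hc : ∀ k, ‖c k‖ ≤ L * b k ^ q) :
    ∃ C, ∀ t : BinaryTree κ, t.numNodes ≤ q →
      |η - treeFreq φ t| * ‖treeCoef c φ η t‖ ≤ C * treeWeight b t := by
  obtain ⟨B, hB⟩ := h.exists_norm_treeCoef_le hη hb hb1 hc le_rfl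
  refine ⟨max η (L * B ^ 2 / η), fun t ht => ?_⟩
  have hw := treeWeight_pos hb t
  obtain _ | ⟨k, l, r⟩ := t
  · simp [treeFreq, treeCoef, treeWeight, abs_of_pos hη]
  have hlr : l.numNodes + r.numNodes + 1 ≤ q := ht
  refine (abs_mul_norm_treeCoef_node_le hη hb hb1 hc (hB l (by omega)) (hB r (by omega))
    ((h _).1 ⟨_, rfl⟩)).trans ?_
  gcongr
  · exact le_max_right _ _
  · exact pow_le_of_le_one hw.le (treeWeight_le_one hb hb1 _) (by omega)

theorem IsNonresonant.summable_norm_treeCoef (h : IsNonresonant b φ η) (hη : 0 < η)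
    (hb : ∀ k, 0 < b k) (hb1 : ∀ k, b k ≤ 1) (hc : ∀ k, ‖c k‖ ≤ L * b k ^ q) {m : ℕ}
    (hm : m ≤ q) :
    Summable fun t : {t : BinaryTree κ // t.numNodes = m} => ‖treeCoef c φ η t‖ := by
  obtain ⟨C, hC⟩ := h.exists_abs_mul_norm_treeCoef_le hη hb hb1 hc
  refine .of_nonneg_of_le (fun _ => norm_nonneg _) (fun t => ?_) ((h m).2.mul_left C)
  rw [mul_div_assoc', le_div_iff₀ (dist_pos.2 ((h m).1 t)), mul_comm, Real.dist_eq]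
  exact hC t (t.2.trans_le hm)

theorem IsNonresonant.summable_abs_treeFreq_mul_norm_treeCoef (h : IsNonresonant b φ η)
    (hη : 0 < η) (hb : ∀ k, 0 < b k) (hb1 : ∀ k, b k ≤ 1) (hsum : Summable b)
    (hc : ∀ k, ‖c k‖ ≤ L * b k ^ q) {m : ℕ} (hm : m ≤ q) :
    Summable fun t : {t : BinaryTree κ // t.numNodes = m} =>
      |treeFreq φ t| * ‖treeCoef c φ η t‖ := by
  obtain ⟨C, hC⟩ := h.exists_abs_mul_norm_treeCoef_le hη hb hb1 hc
  refine .of_nonneg_of_le (fun _ => by positivity) (fun t => ?_)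
    (((h.summable_norm_treeCoef hη hb hb1 hc hm).mul_left η).add
      ((summable_treeWeight hb hsum m).mul_left C))
  have habs : |treeFreq φ t| ≤ η + |η - treeFreq φ t| := by
    simpa [abs_of_pos hη] using abs_sub η (η - treeFreq φ t)
  calc |treeFreq φ t| * ‖treeCoef c φ η t‖
      ≤ (η + |η - treeFreq φ t|) * ‖treeCoef c φ η t‖ := by gcongr
    _ = η * ‖treeCoef c φ η t‖ + |η - treeFreq φ t| * ‖treeCoef c φ η t‖ := add_mul _ _ _
    _ ≤ _ := add_le_add_right (hC t (t.2.trans_le hm)) _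

end Trees

section TreeSeries

open Finset

variable {κ : Type*} {c : κ → ℂ} {φ b : κ → ℝ} {η L : ℝ} {q m : ℕ}

theorem summable_mul_exp_neg_I_mul (hc : Summable fun k => ‖c k‖) (φ : κ → ℝ) (x : ℝ) :
    Summable fun k => c k * Complex.exp (-Complex.I * φ k * x) :=
  .of_norm (by simpa only [norm_mul_exp_neg_I_mul] using hc)

theorem hasDerivAt_expSeries (hc : Summable fun k => ‖c k‖)
    (hφc : Summable fun k => |φ k| * ‖c k‖) (x : ℝ) :
    HasDerivAt (expSeries c φ) (expSeries (fun k => -Complex.I * φ k * c k) φ x) x := by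
  refine hasDerivAt_tsum (g := fun k (y : ℝ) => c k * Complex.exp (-Complex.I * φ k * y))
    (g' := fun k (y : ℝ) => -Complex.I * φ k * c k * Complex.exp (-Complex.I * φ k * y)) hφc
    (fun k y => ?_) (fun k y => ?_) (summable_mul_exp_neg_I_mul hc φ x) x
  · have hy : HasDerivAt (fun y : ℝ => -Complex.I * φ k * y) (-Complex.I * φ k) y := by
      simpa using (hasDerivAt_id y).ofReal_comp.const_mul (-Complex.I * φ k : ℂ)
    exact (hy.cexp.const_mul (c k)).congr_deriv (by ring)
  · exact (norm_mul_exp_neg_I_mul _ _ _).trans_le (by simp)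

theorem expSeries_add (hc : Summable fun k => ‖c k‖) {d : κ → ℂ} (hd : Summable fun k => ‖d k‖)
    (φ : κ → ℝ) (x : ℝ) :
    expSeries c φ x + expSeries d φ x = expSeries (fun k => c k + d k) φ x := by
  rw [expSeries, expSeries, ← (summable_mul_exp_neg_I_mul hc φ x).tsum_add
    (summable_mul_exp_neg_I_mul hd φ x)]
  exact tsum_congr fun k => (add_mul _ _ _).symm

theorem const_mul_expSeries (a : ℂ) (c : κ → ℂ) (φ : κ → ℝ) (x : ℝ) :
    a * expSeries c φ x = expSeries (fun k => a * c k) φ x := by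
  simp only [expSeries, mul_assoc, tsum_mul_left]

theorem tsum_sigma_antidiagonal_mul {f : κ → ℂ} {a : BinaryTree κ → ℂ}
    (hf : Summable fun k => ‖f k‖)
    (ha : ∀ i ≤ m, Summable fun t : {t : BinaryTree κ // t.numNodes = i} => ‖a t‖) :
    ∑' p : Σ p : antidiagonal m, κ × {l : BinaryTree κ // l.numNodes = p.1.1} ×
        {r : BinaryTree κ // r.numNodes = p.1.2}, f p.2.1 * (a p.2.2.1 * a p.2.2.2) =
      (∑' k, f k) * ∑ p ∈ antidiagonal m, (∑' l : {l : BinaryTree κ // l.numNodes = p.1}, a l) *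
        ∑' r : {r : BinaryTree κ // r.numNodes = p.2}, a r := by
  have hl (p : antidiagonal m) := ha p.1.1 (Nat.lt_succ_iff.1 (Nat.antidiagonal.fst_lt p.2))
  have hr (p : antidiagonal m) := ha p.1.2 (Nat.lt_succ_iff.1 (Nat.antidiagonal.snd_lt p.2))
  have hp (p : antidiagonal m) := hf.mul_norm ((hl p).mul_norm (hr p))
  have hsum := (summable_sigma_of_nonneg (f := fun p : Σ p : antidiagonal m,
      κ × {l : BinaryTree κ // l.numNodes = p.1.1} × {r : BinaryTree κ // r.numNodes = p.1.2} =>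
      ‖f p.2.1 * (a p.2.2.1 * a p.2.2.2)‖) fun _ => norm_nonneg _).2 ⟨hp, .of_finite⟩
  rw [Summable.tsum_sigma' (fun p => (hp p).of_norm) hsum.of_norm, tsum_fintype,
    ← sum_coe_sort (antidiagonal m), mul_sum]
  refine sum_congr rfl fun p _ => ?_
  rw [tsum_mul_tsum_of_summable_norm (hl p) (hr p),
    tsum_mul_tsum_of_summable_norm hf ((hl p).mul_norm (hr p))]

/-- The contribution to the expansion `∑ g ^ |t| treeCoef t exp (-i (treeFreq t) x)` of the trees
with `m` nodes, without the factor `g ^ m`. -/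
noncomputable def treeSeries (c : κ → ℂ) (φ : κ → ℝ) (η : ℝ) (m : ℕ) : ℝ → ℂ :=
  expSeries (fun t : {t : BinaryTree κ // t.numNodes = m} => treeCoef c φ η t)
    fun t => treeFreq φ t

theorem treeSeries_zero (c : κ → ℂ) (φ : κ → ℝ) (η x : ℝ) : treeSeries c φ η 0 x = 1 := by
  rw [treeSeries, expSeries, tsum_eq_single ⟨.nil, rfl⟩]
  · simp [treeCoef, treeFreq]
  · rintro ⟨_ | _, ht⟩ hne
    · exact absurd rfl hne
    · cases ht

theorem expSeries_smallDivisor_mul_treeCoef (hη : η ≠ 0)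
    (hne : ∀ t : {t : BinaryTree κ // t.numNodes = m + 1}, η ≠ treeFreq φ t)
    (hc : Summable fun k => ‖c k‖)
    (hcoef : ∀ i ≤ m, Summable fun t : {t : BinaryTree κ // t.numNodes = i} => ‖treeCoef c φ η t‖)
    (x : ℝ) :
    expSeries (fun t : {t : BinaryTree κ // t.numNodes = m + 1} =>
        (η - treeFreq φ t) * treeCoef c φ η t) (fun t => treeFreq φ t) x =
      1 / η * (expSeries c φ x *
        ∑ p ∈ antidiagonal m, treeSeries c φ η p.1 x * treeSeries c φ η p.2 x) := by
  rw [expSeries, ← (nodeEquiv κ m).symm.tsum_eq]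
  simp only [treeSeries, expSeries]
  rw [← tsum_sigma_antidiagonal_mul
    (a := fun t => treeCoef c φ η t * Complex.exp (-Complex.I * treeFreq φ t * x))
    (by simpa only [norm_mul_exp_neg_I_mul])
    (fun i hi => by simpa only [norm_mul_exp_neg_I_mul] using hcoef i hi), ← tsum_mul_left]
  refine tsum_congr fun p => ?_
  have hd : (η : ℂ) - treeFreq φ (.node p.2.1 p.2.2.1 p.2.2.2) ≠ 0 := by
    exact_mod_cast sub_ne_zero.2 (hne ((nodeEquiv κ m).symm p))
  have hη' : (η : ℂ) ≠ 0 := by exact_mod_cast hη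
  have hexp : Complex.exp (-Complex.I * treeFreq φ (.node p.2.1 p.2.2.1 p.2.2.2) * x) =
      Complex.exp (-Complex.I * φ p.2.1 * x) * Complex.exp (-Complex.I * treeFreq φ p.2.2.1 * x) *
        Complex.exp (-Complex.I * treeFreq φ p.2.2.2 * x) := by
    rw [← Complex.exp_add, ← Complex.exp_add, treeFreq]
    push_cast
    ring_nf
  change ((η : ℂ) - treeFreq φ (.node p.2.1 p.2.2.1 p.2.2.2)) *
    treeCoef c φ η (.node p.2.1 p.2.2.1 p.2.2.2) * _ = _
  change _ * Complex.exp (-Complex.I * treeFreq φ (.node p.2.1 p.2.2.1 p.2.2.2) * x) = _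
  rw [hexp, treeCoef]
  push_cast
  field_simp

theorem IsNonresonant.hasDerivAt_treeSeries (h : IsNonresonant b φ η) (hη : 0 < η)
    (hb : ∀ k, 0 < b k) (hb1 : ∀ k, b k ≤ 1) (hsum : Summable b) (hc : Summable fun k => ‖c k‖)
    (hcb : ∀ k, ‖c k‖ ≤ L * b k ^ q) (hm : m < q) (x : ℝ) :
    HasDerivAt (treeSeries c φ η (m + 1)) (-Complex.I * η * treeSeries c φ η (m + 1) x +
      Complex.I / η * (expSeries c φ x *
        ∑ p ∈ antidiagonal m, treeSeries c φ η p.1 x * treeSeries c φ η p.2 x)) x := by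
  have hcoef {i} (hi : i ≤ q) := h.summable_norm_treeCoef hη hb hb1 hcb hi
  have hfreq := h.summable_abs_treeFreq_mul_norm_treeCoef hη hb hb1 hsum hcb (Nat.succ_le_of_lt hm)
  have hmul := expSeries_smallDivisor_mul_treeCoef hη.ne' (h (m + 1)).1 hc
    (fun i hi => hcoef (hi.trans hm.le)) x
  have hadd : expSeries (fun t : {t : BinaryTree κ // t.numNodes = m + 1} =>
        -Complex.I * treeFreq φ t * treeCoef c φ η t) (fun t => treeFreq φ t) x +
      Complex.I * η * treeSeries c φ η (m + 1) x =
      Complex.I * expSeries (fun t : {t : BinaryTree κ // t.numNodes = m + 1} =>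
        (η - treeFreq φ t) * treeCoef c φ η t) (fun t => treeFreq φ t) x := by
    rw [treeSeries, const_mul_expSeries, const_mul_expSeries, expSeries_add (by simpa using hfreq)
      (by simpa only [norm_mul] using (hcoef (Nat.succ_le_of_lt hm)).mul_left _)]
    congr 1
    ext t
    ring
  refine (hasDerivAt_expSeries (hcoef (Nat.succ_le_of_lt hm)) hfreq x).congr_deriv ?_
  linear_combination hadd + Complex.I * hmul

theorem IsNonresonant.norm_treeSeries_le (h : IsNonresonant b φ η) (hη : 0 < η)
    (hb : ∀ k, 0 < b k) (hb1 : ∀ k, b k ≤ 1) (hcb : ∀ k, ‖c k‖ ≤ L * b k ^ q) (hm : m ≤ q)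
    (x : ℝ) :
    ‖treeSeries c φ η m x‖ ≤
      ∑' t : {t : BinaryTree κ // t.numNodes = m}, ‖treeCoef c φ η t‖ :=
  norm_expSeries_le (h.summable_norm_treeCoef hη hb hb1 hcb hm) _ x

end TreeSeries

section ApproximateSolution

open Finset

theorem sq_sum_range_sub_sum_antidiagonal {R : Type*} [CommRing R] (a : ℕ → R) (g : R) (q : ℕ) :
    (∑ m ∈ range (q + 1), g ^ m * a m) ^ 2 -
        ∑ m ∈ range q, g ^ m * ∑ p ∈ antidiagonal m, a p.1 * a p.2 =
      ∑ p ∈ range (q + 1) ×ˢ range (q + 1) with q ≤ p.1 + p.2,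
        g ^ (p.1 + p.2) * (a p.1 * a p.2) := by
  set S := range (q + 1) ×ˢ range (q + 1)
  have hlow : ∑ m ∈ range q, g ^ m * ∑ p ∈ antidiagonal m, a p.1 * a p.2 =
      ∑ p ∈ S with ¬q ≤ p.1 + p.2, g ^ (p.1 + p.2) * (a p.1 * a p.2) := by
    have hmaps : ∀ p ∈ {p ∈ S | ¬q ≤ p.1 + p.2}, p.1 + p.2 ∈ range q := fun p hp =>
      mem_range.2 (not_le.1 (mem_filter.1 hp).2)
    rw [← sum_fiberwise_of_maps_to hmaps]
    refine sum_congr rfl fun m hm => ?_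
    have hfiber : {p ∈ {p ∈ S | ¬q ≤ p.1 + p.2} | p.1 + p.2 = m} = antidiagonal m := by
      ext p
      simp only [S, mem_filter, mem_product, mem_range, HasAntidiagonal.mem_antidiagonal] at hm ⊢
      omega
    rw [hfiber, mul_sum]
    exact sum_congr rfl fun p hp => by rw [HasAntidiagonal.mem_antidiagonal.1 hp]
  have hsq : (∑ m ∈ range (q + 1), g ^ m * a m) ^ 2 =
      ∑ p ∈ S, g ^ (p.1 + p.2) * (a p.1 * a p.2) := by
    rw [sq, sum_mul_sum, ← sum_product']
    exact sum_congr rfl fun p _ => by ring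
  rw [hlow, hsq, ← sum_filter_add_sum_filter_not S fun p => q ≤ p.1 + p.2, add_sub_cancel_right]

theorem norm_sum_range_pow_mul_sub_le {a : ℕ → ℂ} {g : ℝ} (hg : |g| ≤ 1) {B : ℝ} {q : ℕ}
    (ha0 : a 0 = 1) (ha : ∀ m ≤ q, ‖a m‖ ≤ B) :
    ‖∑ m ∈ range (q + 1), (g : ℂ) ^ m * a m - 1‖ ≤ q * B * |g| := by
  rw [sum_range_succ', ha0, pow_zero, mul_one, add_sub_cancel_right]
  refine (norm_sum_le_of_le _ fun m hm => ?_).trans_eq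
    (b := ∑ _m ∈ range q, |g| * B) (by rw [sum_const, card_range, nsmul_eq_mul]; ring)
  rw [norm_mul, norm_pow, Complex.norm_real, Real.norm_eq_abs]
  exact mul_le_mul (pow_le_of_le_one (abs_nonneg g) hg m.succ_ne_zero) (ha _ (mem_range.1 hm))
    (norm_nonneg _) (abs_nonneg g)

theorem norm_sum_range_deriv_pow_mul_le {a : ℕ → ℂ} {g g' : ℝ} (hg : |g| ≤ 1) {B : ℝ} {q : ℕ}
    (ha : ∀ m ≤ q, ‖a m‖ ≤ B) :
    ‖∑ m ∈ range (q + 1), (m * (g : ℂ) ^ (m - 1) * g') * a m‖ ≤ (q + 1) * (q * B) * |g'| := by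
  refine (norm_sum_le_of_le _ fun m hm => ?_).trans_eq
    (b := ∑ _m ∈ range (q + 1), q * 1 * |g'| * B)
    (by rw [sum_const, card_range, nsmul_eq_mul]; push_cast; ring)
  have hm : m ≤ q := mem_range_succ_iff.1 hm
  simp only [norm_mul, norm_pow, Complex.norm_real, Complex.norm_natCast, Real.norm_eq_abs]
  gcongr
  · exact pow_le_one₀ (abs_nonneg g) hg
  · exact ha m hm

theorem norm_sum_high_pow_mul_le {a : ℕ → ℂ} {g : ℝ} (hg : |g| ≤ 1) {B : ℝ} {q : ℕ}
    (ha : ∀ m ≤ q, ‖a m‖ ≤ B) :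
    ‖∑ p ∈ range (q + 1) ×ˢ range (q + 1) with q ≤ p.1 + p.2,
      (g : ℂ) ^ (p.1 + p.2) * (a p.1 * a p.2)‖ ≤ ((q + 1) * B) ^ 2 * |g| ^ q := by
  have hB : 0 ≤ B := (norm_nonneg _).trans (ha 0 q.zero_le)
  refine (norm_sum_le_of_le (n := fun _ => |g| ^ q * (B * B)) _ fun p hp => ?_).trans ?_
  · simp only [mem_filter, mem_product, mem_range_succ_iff] at hp
    rw [norm_mul, norm_pow, norm_mul, Complex.norm_real, Real.norm_eq_abs]
    exact mul_le_mul (pow_le_pow_of_le_one (abs_nonneg g) hg hp.2)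
      (mul_le_mul (ha _ hp.1.1) (ha _ hp.1.2) (norm_nonneg _) hB) (by positivity) (by positivity)
  · rw [sum_const, nsmul_eq_mul]
    have hcard := card_filter_le (range (q + 1) ×ˢ range (q + 1)) fun p => q ≤ p.1 + p.2
    rw [card_product, card_range] at hcard
    have hcard' : ((#{p ∈ range (q + 1) ×ˢ range (q + 1) | q ≤ p.1 + p.2} : ℕ) : ℝ) ≤
        (q + 1) * (q + 1) := by exact_mod_cast hcard
    calc _ ≤ ((q + 1) * (q + 1) : ℝ) * (|g| ^ q * (B * B)) := by gcongr
      _ = _ := by ring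

variable {A : ℕ → ℝ → ℂ} {W : ℝ → ℂ} {g g' : ℝ → ℝ} {η x : ℝ} {q : ℕ}

theorem hasDerivAt_sum_pow_mul (hg : HasDerivAt g (g' x) x) (hA0 : ∀ x, A 0 x = 1)
    (hA : ∀ m < q, HasDerivAt (A (m + 1)) (-Complex.I * η * A (m + 1) x +
      Complex.I / η * (W x * ∑ p ∈ antidiagonal m, A p.1 x * A p.2 x)) x) :
    HasDerivAt (fun x => ∑ m ∈ range (q + 1), (g x : ℂ) ^ m * A m x)
      (∑ m ∈ range (q + 1), (m * (g x : ℂ) ^ (m - 1) * g' x) * A m x +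
        Complex.I * η * (1 - ∑ m ∈ range (q + 1), (g x : ℂ) ^ m * A m x) +
        Complex.I / η * (g x * W x *
          ∑ m ∈ range q, (g x : ℂ) ^ m * ∑ p ∈ antidiagonal m, A p.1 x * A p.2 x)) x := by
  set A' : ℕ → ℂ := fun m => match m with
    | 0 => 0
    | m + 1 => -Complex.I * η * A (m + 1) x +
      Complex.I / η * (W x * ∑ p ∈ antidiagonal m, A p.1 x * A p.2 x)
  have hA' : ∀ m ∈ range (q + 1), HasDerivAt (A m) (A' m) x := fun m hm => by
    obtain _ | m := m
    · exact (hasDerivAt_const x 1).congr_of_eventuallyEq (.of_forall hA0)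
    · exact hA m (Nat.lt_of_succ_lt_succ (mem_range.1 hm))
  refine (HasDerivAt.fun_sum fun m hm => (hg.ofReal_comp.pow m).mul (hA' m hm)).congr_deriv ?_
  have hsum : ∑ m ∈ range (q + 1), (g x : ℂ) ^ m * A' m =
      Complex.I * η * (1 - ∑ m ∈ range (q + 1), (g x : ℂ) ^ m * A m x) + Complex.I / η *
        (g x * W x *
          ∑ m ∈ range q, (g x : ℂ) ^ m * ∑ p ∈ antidiagonal m, A p.1 x * A p.2 x) := by
    rw [sum_range_succ' (fun m => (g x : ℂ) ^ m * A' m),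
      sum_range_succ' (fun m => (g x : ℂ) ^ m * A m x), hA0, mul_sum, mul_sum, pow_zero, mul_one,
      sub_add_cancel_right, mul_neg, mul_sum, ← sum_neg_distrib, ← sum_add_distrib, mul_zero,
      add_zero]
    exact sum_congr rfl fun m _ => by simp only [A']; ring
  rw [sum_add_distrib, add_assoc, ← hsum]
  rfl

theorem exists_approxSolution_riccati {B D : ℝ} (hη : 0 < η) (hA0 : ∀ x, A 0 x = 1)
    (hA : ∀ m < q, ∀ x, HasDerivAt (A (m + 1)) (-Complex.I * η * A (m + 1) x +
      Complex.I / η * (W x * ∑ p ∈ antidiagonal m, A p.1 x * A p.2 x)) x)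
    (hB : ∀ m ≤ q, ∀ x, ‖A m x‖ ≤ B) (hD : ∀ x, ‖W x‖ ≤ D) :
    ∃ C, ∀ (g g' : ℝ → ℝ) (X : ℝ), (∀ x, HasDerivAt g (g' x) x) → (∀ x > X, |g x| ≤ 1) →
      ∃ y e : ℝ → ℂ, ∀ x > X, ‖y x - 1‖ ≤ C * |g x| ∧ ‖e x‖ ≤ C * (|g' x| + |g x| ^ (q + 1)) ∧
        HasDerivAt y
          (Complex.I * η * (1 - y x) + Complex.I / η * (g x * W x * y x ^ 2) + e x) x := by
  set C := max ((q + 1) * (q * B)) (1 / η * D * ((q + 1) * B) ^ 2)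
  refine ⟨max (q * B) C, fun g g' X hg hg1 => ?_⟩
  refine ⟨fun x => ∑ m ∈ range (q + 1), (g x : ℂ) ^ m * A m x, fun x =>
    ∑ m ∈ range (q + 1), (m * (g x : ℂ) ^ (m - 1) * g' x) * A m x -
      Complex.I / η * (g x * W x * ∑ p ∈ range (q + 1) ×ˢ range (q + 1) with q ≤ p.1 + p.2,
        (g x : ℂ) ^ (p.1 + p.2) * (A p.1 x * A p.2 x)), fun x hx => ⟨?_, ?_, ?_⟩⟩
  · refine (norm_sum_range_pow_mul_sub_le (hg1 x hx) (hA0 x) fun m hm => hB m hm x).trans ?_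
    gcongr
    exact le_max_left _ _
  · have hlow := norm_sum_range_deriv_pow_mul_le (g' := g' x) (hg1 x hx) fun m hm => hB m hm x
    have hhigh := norm_sum_high_pow_mul_le (hg1 x hx) fun m hm => hB m hm x
    have hI : ‖Complex.I / (η : ℂ)‖ = 1 / η := by
      rw [norm_div, Complex.norm_I, Complex.norm_real, Real.norm_of_nonneg hη.le]
    refine (norm_sub_le_of_le hlow (norm_mul_le_of_le hI.le (norm_mul_le_of_le
      (norm_mul_le_of_le (Complex.norm_real (g x)).le (hD x)) hhigh))).trans ?_
    rw [Real.norm_eq_abs]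
    calc (q + 1) * (q * B) * |g' x| + 1 / η * (|g x| * D * (((q + 1) * B) ^ 2 * |g x| ^ q))
        = (q + 1) * (q * B) * |g' x| + 1 / η * D * ((q + 1) * B) ^ 2 * |g x| ^ (q + 1) := by ring
      _ ≤ C * |g' x| + C * |g x| ^ (q + 1) := by
        gcongr
        exacts [le_max_left _ _, le_max_right _ _]
      _ = C * (|g' x| + |g x| ^ (q + 1)) := (mul_add _ _ _).symm
      _ ≤ _ := by gcongr; exact le_max_right _ _
  · refine (hasDerivAt_sum_pow_mul (hg x) hA0 fun m hm => hA m hm x).congr_deriv ?_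
    simp only [← sq_sum_range_sub_sum_antidiagonal (fun m => A m x)]
    ring

end ApproximateSolution

section Nonresonant

open Filter Set Topology

variable {κ : Type*} {b : κ → ℝ}

theorem dimH_not_isNonresonant_le (hb : ∀ k, 0 < b k) (φ : κ → ℝ) {β : ℝ} (hβ0 : 0 < β)
    (hβ1 : β ≤ 1) (hsum : Summable fun k => b k ^ β) :
    dimH {η | ¬IsNonresonant b φ η} ≤ ENNReal.ofReal β := by
  have hsub : {η | ¬IsNonresonant b φ η} ⊆ ⋃ m : ℕ,
      {η | ¬((∀ t : {t : BinaryTree κ // t.numNodes = m}, η ≠ treeFreq φ t) ∧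
        Summable fun t : {t : BinaryTree κ // t.numNodes = m} =>
          treeWeight b t / dist η (treeFreq φ t))} := fun η hη =>
    mem_iUnion.2 (not_forall.1 hη)
  refine (dimH_mono hsub).trans ((dimH_iUnion _).trans_le (iSup_le fun m => ?_))
  refine dimH_not_summable_div_dist_le
    (fun t : {t : BinaryTree κ // t.numNodes = m} => treeFreq φ t)
    (fun t => treeWeight_pos hb t) hβ0 hβ1 ?_
  simp only [treeWeight_rpow hb]
  exact summable_treeWeight (fun k => Real.rpow_pos_of_pos (hb k) β) hsum m

variable {c : κ → ℂ} {φ : κ → ℝ} {L k η X : ℝ} {q : ℕ} {γ T V u u' : ℝ → ℝ} {s : Set ℝ}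

theorem IsNonresonant.exists_norm_treeSeries_le (h : IsNonresonant b φ η) (hη : 0 < η)
    (hb : ∀ k, 0 < b k) (hb1 : ∀ k, b k ≤ 1) (hcb : ∀ k, ‖c k‖ ≤ L * b k ^ q) :
    ∃ B, ∀ m ≤ q, ∀ x, ‖treeSeries c φ η m x‖ ≤ B := by
  set S : ℕ → ℝ := fun m => ∑' t : {t : BinaryTree κ // t.numNodes = m}, ‖treeCoef c φ η t‖
  have hS : ∀ m, 0 ≤ S m := fun m => tsum_nonneg fun _ => norm_nonneg _
  refine ⟨∑ m ∈ Finset.range (q + 1), S m, fun m hm x => ?_⟩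
  exact (h.norm_treeSeries_le hη hb hb1 hcb hm x).trans
    (Finset.single_le_sum (fun i _ => hS i) (Finset.mem_range_succ_iff.2 hm))

theorem norm_I_div_mul_mul_sq_le (hk : 0 < k) {r D : ℝ} {w y : ℂ} (hw : ‖w‖ ≤ D)
    (hy : ‖y‖ ≤ 2) : ‖Complex.I / (2 * k) * (r * w) * y ^ 2‖ ≤ 2 * D / k * |r| := by
  rw [norm_mul, norm_mul, norm_mul, norm_pow, norm_div, norm_mul, Complex.norm_I,
    Complex.norm_ofNat, Complex.norm_real, Complex.norm_real, Real.norm_of_nonneg hk.le,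
    Real.norm_eq_abs]
  have hD : 0 ≤ D := (norm_nonneg w).trans hw
  calc 1 / (2 * k) * (|r| * ‖w‖) * ‖y‖ ^ 2 ≤ 1 / (2 * k) * (|r| * D) * 2 ^ 2 := by gcongr
    _ = 2 * D / k * |r| := by ring

theorem IsNonresonant.exists_approxSolution_riccatiField (h : IsNonresonant b φ (2 * k))
    (hk : 0 < k) (hb : ∀ k, 0 < b k) (hb1 : ∀ k, b k ≤ 1) (hsum : Summable b)
    (hc : Summable fun k => ‖c k‖) (hcb : ∀ k, ‖c k‖ ≤ L * b k ^ q) (hγ : VariationBoundedBy γ T)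
    (hT : BddAbove (T '' Ioi X)) (hγp : IntegrableOn (fun x => |γ x| ^ (q + 1)) (Ioi X))
    (hγ0 : Tendsto γ atTop (𝓝 0)) (hV : ∀ x > X, (V x : ℂ) = γ x * expSeries c φ x) :
    ∃ Y ≥ X, ∃ (v e : ℝ → ℂ) (ε : ℝ → ℝ), IntegrableOn ε (Ioi Y) ∧ ∀ x > Y,
      HasDerivAt v (riccatiField k (V x / (2 * k)) (v x) + e x) x ∧ ‖v x‖ ≤ 1 / 2 ∧
        ‖e x‖ ≤ ε x := by
  have hη : 0 < 2 * k := by positivity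
  obtain ⟨B, hB⟩ := h.exists_norm_treeSeries_le hη hb hb1 hcb
  have hW := norm_expSeries_le hc φ
  obtain ⟨C, hC⟩ := exists_approxSolution_riccati hη (treeSeries_zero c φ _)
    (fun m hm x => h.hasDerivAt_treeSeries hη hb hb1 hsum hc hcb hm x) hB hW
  obtain ⟨g, g', hg, hg', hγg, hgp, hg0⟩ :=
    hγ.exists_hasDerivAt_integrableOn hT q.succ_ne_zero hγp hγ0
  obtain ⟨Y, hXY, hY⟩ : ∃ Y ≥ X, ∀ x > Y, |g x| ≤ 1 ∧ C * |g x| ≤ 1 / 2 := by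
    have hg0' : Tendsto (fun x => |g x|) atTop (𝓝 0) := by simpa using hg0.abs
    have hCg0 : Tendsto (fun x => C * |g x|) atTop (𝓝 0) := by simpa using hg0'.const_mul C
    obtain ⟨Y, hY⟩ := eventually_atTop.1 <| (hg0'.eventually_le_const one_pos).and <|
      hCg0.eventually_le_const (u := 1 / 2) (by norm_num)
    exact ⟨max X Y, le_max_left _ _, fun x hx => hY x ((le_max_right _ _).trans hx.le)⟩
  obtain ⟨y, e, hy⟩ := hC g g' Y hg fun x hx => (hY x hx).1
  have hy1 : ∀ x > Y, ‖y x - 1‖ ≤ 1 / 2 := fun x hx => (hy x hx).1.trans (hY x hx).2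
  set D := ∑' k, ‖c k‖
  refine ⟨Y, hXY, fun x => 1 - y x, fun x =>
    Complex.I / (2 * k) * (↑(γ x - g x) * expSeries c φ x) * y x ^ 2 - e x, fun x =>
    2 * D / k * |γ x - g x| + C * (|g' x| + |g x| ^ (q + 1)), ?_, fun x hx => ⟨?_, ?_, ?_⟩⟩
  · exact IntegrableOn.mono_set ((hγg.abs.const_mul _).add ((hg'.abs.add hgp).const_mul _))
      (Ioi_subset_Ioi hXY)
  · refine ((hy x hx).2.2.const_sub 1).congr_deriv ?_
    rw [riccatiField]
    push_cast
    rw [hV x (hXY.trans_lt hx)]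
    field_simp
    ring
  · rw [norm_sub_rev]
    exact hy1 x hx
  · have hy2 : ‖y x‖ ≤ 2 := by
      linarith [norm_le_norm_add_norm_sub' (y x) 1, hy1 x hx, norm_one (α := ℂ)]
    exact norm_sub_le_of_le (norm_I_div_mul_mul_sq_le hk (hW x) hy2) (hy x hx).2.1

theorem IsSolutionOff.exists_eventually_abs_le_of_isNonresonant
    (hu : IsSolutionOff V (k ^ 2) X s u u') (hs : s.Countable) (h : IsNonresonant b φ (2 * k))
    (hk : 0 < k) (hb : ∀ k, 0 < b k) (hb1 : ∀ k, b k ≤ 1) (hsum : Summable b)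
    (hc : Summable fun k => ‖c k‖) (hcb : ∀ k, ‖c k‖ ≤ L * b k ^ q) (hγ : VariationBoundedBy γ T)
    (hT : BddAbove (T '' Ioi X)) (hγp : IntegrableOn (fun x => |γ x| ^ (q + 1)) (Ioi X))
    (hγ0 : Tendsto γ atTop (𝓝 0)) (hV : ∀ x > X, (V x : ℂ) = γ x * expSeries c φ x) :
    ∃ C, ∀ᶠ x in atTop, |u x| ≤ C := by
  obtain ⟨Y, hXY, v, e, ε, hε, hv⟩ :=
    h.exists_approxSolution_riccatiField hk hb hb1 hsum hc hcb hγ hT hγp hγ0 hV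
  exact (hu.mono hXY).exists_eventually_abs_le_atTop hs hk.ne' (fun x hx => (hv x hx).1)
    (fun x hx => (hv x hx).2.1) hε fun x hx => (hv x hx).2.2

end Nonresonant

section UnboundedSolutions

open Filter Function Set Topology

theorem dimH_two_mul_sqrt_mem_le (A : Set ℝ) : dimH {E | 0 < E ∧ 2 * √E ∈ A} ≤ dimH A := by
  have hf : ContDiff ℝ 1 fun η : ℝ => (η / 2) ^ 2 := by fun_prop
  have hsub : {E | 0 < E ∧ 2 * √E ∈ A} ⊆ (fun η : ℝ => (η / 2) ^ 2) '' A := fun E ⟨hE, hA⟩ =>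
    ⟨2 * √E, hA, by simp only [mul_div_cancel_left₀ _ (two_ne_zero' ℝ), Real.sq_sqrt hE.le]⟩
  exact (dimH_mono hsub).trans (hf.contDiffOn.dimH_image_le convex_univ (subset_univ A))

variable {κ : Type*} {c : κ → ℂ} {φ b : κ → ℝ} {E L : ℝ} {q : ℕ} {γ T V : ℝ → ℝ} {u u' : ℝ → ℂ}

theorem exists_weight_of_summable_rpow (hc0 : ∀ k, c k ≠ 0) {α : ℝ} (hα : 0 < α)
    (hc : Summable fun k => ‖c k‖ ^ α) (hq : q ≠ 0) :
    ∃ (b : κ → ℝ) (L : ℝ), (∀ k, 0 < b k) ∧ (∀ k, b k ≤ 1) ∧ (∀ k, ‖c k‖ ≤ L * b k ^ q) ∧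
      Summable fun k => b k ^ (q * α) := by
  set L := 1 + (∑' k, ‖c k‖ ^ α) ^ α⁻¹
  have hnonneg : ∀ k, 0 ≤ ‖c k‖ ^ α := fun k => by positivity
  have hL : 0 < L := add_pos_of_pos_of_nonneg one_pos (Real.rpow_nonneg (tsum_nonneg hnonneg) _)
  have hcL : ∀ k, ‖c k‖ ≤ L := fun k => by
    have hk := (Real.le_rpow_inv_iff_of_pos (norm_nonneg _) (tsum_nonneg hnonneg) hα).2
      (hc.le_tsum k fun j _ => hnonneg j)
    exact hk.trans (le_add_of_nonneg_left zero_le_one)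
  have hpos : ∀ k, 0 < ‖c k‖ / L := fun k => div_pos (norm_pos_iff.2 (hc0 k)) hL
  refine ⟨fun k => (‖c k‖ / L) ^ (q : ℝ)⁻¹, L, fun k => Real.rpow_pos_of_pos (hpos k) _,
    fun k => Real.rpow_le_one (hpos k).le ((div_le_one hL).2 (hcL k)) (by positivity),
    fun k => ?_, ?_⟩
  · rw [Real.rpow_inv_natCast_pow (hpos k).le hq, mul_div_cancel₀ _ hL.ne']
  · refine (hc.div_const (L ^ α)).congr fun k => ?_
    rw [← Real.rpow_mul (hpos k).le, inv_mul_cancel_left₀ (Nat.cast_ne_zero.2 hq),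
      Real.div_rpow (norm_nonneg _) hL.le]

theorem exists_variationBoundedBy_integrableOn {p : ℕ} (hp : p ≠ 0)
    (hγ : BoundedVariationOn γ (Ioi 0)) (hc : Summable fun k => ‖c k‖)
    (hV : ∀ x > 0, (V x : ℂ) = γ x * expSeries c φ x)
    (hVp : ∫⁻ x in Ioi (0 : ℝ), (‖V x‖₊ : ℝ≥0∞) ^ p < ⊤) :
    ∃ γ' T, VariationBoundedBy γ' T ∧ BddAbove (T '' Ioi 0) ∧
      IntegrableOn (fun x => |γ' x| ^ p) (Ioi 0) ∧ Tendsto γ' atTop (𝓝 0) ∧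
      ∀ x > 0, (V x : ℂ) = γ' x * expSeries c φ x := by
  by_cases hzero : ∀ x, expSeries c φ x = 0
  · refine ⟨0, 0, fun x y _ => by simp, ⟨0, by rintro _ ⟨x, -, rfl⟩; rfl⟩, by simp [hp],
      tendsto_const_nhds, fun x hx => by simp [hV x hx, hzero x]⟩
  obtain ⟨x₀, hx₀⟩ := not_forall.1 hzero
  obtain ⟨N, hN, δ, hδ, hlow⟩ := exists_le_integral_norm_expSeries_pow hc φ hx₀ p
  obtain ⟨γ', T, heq, hγT, hT⟩ := exists_variationBoundedBy_of_boundedVariationOn hγ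
  have hV' : ∀ x > 0, (V x : ℂ) = γ' x * expSeries c φ x := fun x hx => by rw [hV x hx, heq hx]
  have hω := continuous_expSeries hc φ
  have hVint : IntegrableOn (fun x => (|γ' x| * ‖expSeries c φ x‖) ^ p) (Ioi 0) := by
    refine ⟨((hγT.measurable.abs.mul hω.norm.measurable).pow_const p).aestronglyMeasurable, ?_⟩
    refine (setLIntegral_congr_fun measurableSet_Ioi fun x hx => ?_).trans_lt hVp
    rw [enorm_pow, enorm_mul, enorm_norm, ← Real.norm_eq_abs, enorm_norm, ← enorm_eq_nnnorm,
      ← enorm_norm (V x), ← Complex.norm_real (V x), enorm_norm, hV' x hx, enorm_mul,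
      ← enorm_norm (γ' x : ℂ), Complex.norm_real, enorm_norm]
  obtain ⟨hγp, hγ0⟩ := hγT.integrableOn_pow_and_tendsto_zero hT hω (norm_expSeries_le hc φ) hp
    hVint hN hδ hlow
  exact ⟨γ', T, hγT, hT, hγp, hγ0, hV'⟩

theorem IsWeakSolution.exists_forall_norm_le_of_isNonresonant (hu : IsWeakSolution V E u u')
    (hE : 0 < E) (h : IsNonresonant b φ (2 * √E)) (hb : ∀ k, 0 < b k) (hb1 : ∀ k, b k ≤ 1)
    (hsum : Summable b) (hc : Summable fun k => ‖c k‖) (hcb : ∀ k, ‖c k‖ ≤ L * b k ^ q)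
    (hγ : VariationBoundedBy γ T) (hT : BddAbove (T '' Ioi 0))
    (hγp : IntegrableOn (fun x => |γ x| ^ (q + 1)) (Ioi 0)) (hγ0 : Tendsto γ atTop (𝓝 0))
    (hV : ∀ x > 0, (V x : ℂ) = γ x * expSeries c φ x) :
    ∃ C, ∀ x ∈ Ioi (0 : ℝ), ‖u x‖ ≤ C := by
  obtain ⟨M, hM⟩ := hγ.exists_forall_abs_le hT
  have hω := continuous_expSeries hc φ
  have hs := hγ.countable_not_continuousAt
  refine hu.exists_forall_norm_le hs (fun x hx hγx => ?_) (M := M * ∑' k, ‖c k‖) (fun x hx => ?_)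
    fun w w' hw => ?_
  · have hγc : ContinuousAt (fun y => (γ y * expSeries c φ y).re) x :=
      Complex.continuous_re.continuousAt.comp ((Complex.continuous_ofReal.continuousAt.comp
        (not_not.1 hγx)).mul hω.continuousAt)
    refine hγc.congr ?_
    filter_upwards [Ioi_mem_nhds hx] with y hy
    rw [← hV y hy, Complex.ofReal_re]
  · rw [← Real.norm_eq_abs, ← Complex.norm_real, hV x hx]
    exact norm_mul_le_of_le ((Complex.norm_real _).trans_le (hM x hx)) (norm_expSeries_le hc φ x)
  · rw [← Real.sq_sqrt hE.le] at hw
    exact hw.exists_eventually_abs_le_of_isNonresonant hs h (Real.sqrt_pos.2 hE) hb hb1 hsum hc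
      hcb hγ hT hγp hγ0 hV

theorem stmt1_general (p : ℕ) (hp : 2 ≤ p) (α : ℝ) (hα0 : 0 < α) (hα1 : α < 1 / ((p : ℝ) - 1))
    (γ : ℝ → ℝ) (hγ : BoundedVariationOn γ (Ioi 0)) {κ : Type*} (c : κ → ℂ)
    (hc : Summable fun k => ‖c k‖ ^ α) (φ : κ → ℝ) (V : ℝ → ℝ)
    (hV : ∀ x ∈ Ioi (0 : ℝ), (V x : ℂ) = γ x * expSeries c φ x)
    (hVp : ∫⁻ x in Ioi (0 : ℝ), (‖V x‖₊ : ℝ≥0∞) ^ p < ⊤) :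
    dimH {E : ℝ | 0 < E ∧ ∃ u u' : ℝ → ℂ, IsWeakSolution V E u u' ∧
        ¬ ∃ C : ℝ, ∀ x ∈ Ioi (0 : ℝ), ‖u x‖ ≤ C} ≤ ENNReal.ofReal (((p : ℝ) - 1) * α) := by
  obtain ⟨q, rfl⟩ : ∃ q, p = q + 1 := ⟨p - 1, by omega⟩
  have hq : (1 : ℝ) ≤ q := by exact_mod_cast (by omega : 1 ≤ q)
  rw [Nat.cast_add_one, add_sub_cancel_right] at hα1 ⊢
  have hβ0 : 0 < q * α := by positivity
  have hβ1 : q * α ≤ 1 := by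
    rw [mul_comm]
    exact ((lt_div_iff₀ (one_pos.trans_le hq)).1 hα1).le
  have hα : α ≤ 1 := (le_mul_of_one_le_left hα0.le hq).trans hβ1
  have hcα : Summable fun k : support c => ‖c k‖ ^ α := hc.subtype _
  have hc' := summable_of_summable_rpow hα0 hα (fun _ => norm_nonneg _) hcα
  obtain ⟨b, L, hb, hb1, hcb, hbβ⟩ :=
    exists_weight_of_summable_rpow (fun k : support c => k.2) hα0 hcα (by omega : q ≠ 0)
  have hbsum := summable_of_summable_rpow hβ0 hβ1 (fun k => (hb k).le) hbβ
  rw [← expSeries_support c φ] at hV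
  obtain ⟨γ', T, hγT, hT, hγp, hγ0, hV'⟩ :=
    exists_variationBoundedBy_integrableOn q.succ_ne_zero hγ hc' hV hVp
  refine (dimH_mono ?_).trans ((dimH_two_mul_sqrt_mem_le _).trans
    (dimH_not_isNonresonant_le hb (fun k : support c => φ k) hβ0 hβ1 hbβ))
  rintro E ⟨hE, u, u', hu, hunb⟩
  exact ⟨hE, fun h => hunb <| hu.exists_forall_norm_le_of_isNonresonant hE h hb hb1 hbsum hc' hcb
    hγT hT hγp hγ0 hV'⟩

end UnboundedSolutions

theorem stmt1 (p : ℕ) (hp : 2 ≤ p) (α : ℝ) (hα0 : 0 < α) (hα1 : α < 1 / ((p : ℝ) - 1))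
    (γ : ℝ → ℝ) (hγ : BoundedVariationOn γ (Set.Ioi 0))
    (c : ℕ → ℂ) (hc : Summable fun k => ‖c k‖ ^ α) (φ : ℕ → ℝ)
    (V : ℝ → ℝ)
    (hV : ∀ x ∈ Set.Ioi (0:ℝ),
      (V x : ℂ) = (γ x : ℂ) * ∑' k, c k * Complex.exp (-Complex.I * (φ k) * x))
    (hVp : ∫⁻ x in Set.Ioi (0:ℝ), (‖V x‖₊ : ℝ≥0∞) ^ p < ⊤) :
    dimH {E : ℝ | 0 < E ∧ ∃ u u' : ℝ → ℂ, IsWeakSolution V E u u' ∧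
        ¬ ∃ C : ℝ, ∀ x ∈ Set.Ioi (0:ℝ), ‖u x‖ ≤ C} ≤
      ENNReal.ofReal (((p : ℝ) - 1) * α) :=
  stmt1_general p hp α hα0 hα1 γ hγ c hc φ V hV hVp
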